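/- Let u be a monotone traveling wave solution of the balanced Allen-Cahn equation in the plane, and let ρ(y) := ∫_ℝ [ ½((∂u/∂x(x,y))² − (∂u/∂y(x,y))²) + F(u(x,y)) ] dx. Then lim_{y→−∞} ρ(y) = 0, lim_{y→+∞} ρ(y) = 2𝔢, and consequently c ∫_{ℝ²} (∂u/∂y)² dx dy = 2𝔢, where 𝔢 := ∫_{−1}^{1} √(2F(s)) ds. -/

import Mathlib

open Real Filter MeasureTheory Metric

noncomputable def pdx (u : ℝ → ℝ → ℝ) (x y : ℝ) : ℝ := deriv (fun t => u t y) x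

noncomputable def pdy (u : ℝ → ℝ → ℝ) (x y : ℝ) : ℝ := deriv (fun t => u x t) y

noncomputable def pdxx (u : ℝ → ℝ → ℝ) (x y : ℝ) : ℝ := deriv (fun t => pdx u t y) x

noncomputable def pdyy (u : ℝ → ℝ → ℝ) (x y : ℝ) : ℝ := deriv (fun t => pdy u x t) y

/-- `F` is a balanced double-well potential. -/
def BalancedDoubleWell (F : ℝ → ℝ) : Prop :=
  ContDiff ℝ 3 F ∧ deriv F (-1) = 0 ∧ deriv F 1 = 0 ∧
  0 < deriv (deriv F) (-1) ∧ 0 < deriv (deriv F) 1 ∧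
  (∀ s ∈ Set.Ioo (-1 : ℝ) 0, 0 < deriv F s) ∧
  (∀ s ∈ Set.Ioo (0 : ℝ) 1, deriv F s < 0) ∧
  F (-1) = 0 ∧ F 1 = 0

/-- `u` is a `C³` solution of `Δu + c uᵧ = F'(u)` on `ℝ²` with `|u| ≤ 1`
which is monotone in `y`. -/
def IsSolution (F : ℝ → ℝ) (c : ℝ) (u : ℝ → ℝ → ℝ) : Prop :=
  ContDiff ℝ 3 (fun p : ℝ × ℝ => u p.1 p.2) ∧
  (∀ x y : ℝ, pdxx u x y + pdyy u x y + c * pdy u x y = deriv F (u x y)) ∧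
  (∀ x y : ℝ, |u x y| ≤ 1) ∧
  (∀ x y : ℝ, 0 < pdy u x y)

/-- A monotone traveling wave solution connecting `-1` to `1`. -/
def IsTravelingWave (F : ℝ → ℝ) (c : ℝ) (u : ℝ → ℝ → ℝ) : Prop :=
  IsSolution F c u ∧
  (∀ x : ℝ, Tendsto (fun y => u x y) atTop (nhds 1)) ∧
  (∀ x : ℝ, Tendsto (fun y => u x y) atBot (nhds (-1)))

/-!
The vector field `(uₓ uᵧ, ½ (uᵧ² - uₓ²) - F(u))` has divergence `-c uᵧ²`. Integrated over vertical
strips this says that the momentum `P(x) = ∫ uₓ uᵧ dy` satisfies `P(a) - P(b) = c ∫ₐᵇ ∫ uᵧ² dy dx`.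
As `P` is bounded, `uᵧ²` is integrable over the plane; since `u` has bounded derivatives, `uᵧ` and
`uᵧᵧ` then vanish at infinity. For large `|x|` the equation is therefore nearly `uₓₓ = F'(u)` and
nearly conserves `F(u) - ½ uₓ²` along horizontal lines, where a value away from `0` would drive `u`
out of `[-1, 1]`. Hence `uₓ` is close to `±√(2F(u))`, with one sign on each vertical line, and
`|P(x)| → 𝔢` on both sides. As `P` is strictly decreasing, its limits at `-∞` and `+∞` are `𝔢` and
`-𝔢`, which is the total balance `c ∫ uᵧ² = 2𝔢`.

The limit `-𝔢` also selects `uₓ ≈ -√(2F(u))` on the far right, so that `u` stays near `-1` below a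
line of slope `1`; there `1 + u` is a subsolution of a linear equation and decays exponentially.
With the mirror image on the left this dominates the integrand of `ρ` by an integrable function of
`x` on every lower half-plane, whence `ρ(-∞) = 0`. Integrating the divergence identity over
horizontal strips gives `ρ(y₂) - ρ(y₁) = c ∫ ∫_{y₁}^{y₂} uᵧ² dy dx`, and `ρ(+∞)` follows from the
total balance.
-/

open scoped Topology

/-! ### Partial derivatives -/

section PartialDerivatives

variable {u : ℝ → ℝ → ℝ} {m n : WithTop ℕ∞}

theorem hasDerivAt_fderiv_fst (hu : Differentiable ℝ fun p : ℝ × ℝ => u p.1 p.2) (x y : ℝ) :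
    HasDerivAt (fun t => u t y) (fderiv ℝ (fun p : ℝ × ℝ => u p.1 p.2) (x, y) (1, 0)) x :=
  (hu (x, y)).hasFDerivAt.comp_hasDerivAt (f := fun t : ℝ => (t, y)) x
    ((hasDerivAt_id x).prodMk (hasDerivAt_const x y))

theorem hasDerivAt_fderiv_snd (hu : Differentiable ℝ fun p : ℝ × ℝ => u p.1 p.2) (x y : ℝ) :
    HasDerivAt (fun t => u x t) (fderiv ℝ (fun p : ℝ × ℝ => u p.1 p.2) (x, y) (0, 1)) y :=
  (hu (x, y)).hasFDerivAt.comp_hasDerivAt (f := fun t : ℝ => (x, t)) y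
    ((hasDerivAt_const y x).prodMk (hasDerivAt_id y))

theorem hasDerivAt_pdx (hu : Differentiable ℝ fun p : ℝ × ℝ => u p.1 p.2) (x y : ℝ) :
    HasDerivAt (fun t => u t y) (pdx u x y) x :=
  (hasDerivAt_fderiv_fst hu x y).differentiableAt.hasDerivAt

theorem hasDerivAt_pdy (hu : Differentiable ℝ fun p : ℝ × ℝ => u p.1 p.2) (x y : ℝ) :
    HasDerivAt (fun t => u x t) (pdy u x y) y :=
  (hasDerivAt_fderiv_snd hu x y).differentiableAt.hasDerivAt

theorem pdx_eq_fderiv (hu : Differentiable ℝ fun p : ℝ × ℝ => u p.1 p.2) (x y : ℝ) :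
    pdx u x y = fderiv ℝ (fun p : ℝ × ℝ => u p.1 p.2) (x, y) (1, 0) :=
  (hasDerivAt_fderiv_fst hu x y).deriv

theorem pdy_eq_fderiv (hu : Differentiable ℝ fun p : ℝ × ℝ => u p.1 p.2) (x y : ℝ) :
    pdy u x y = fderiv ℝ (fun p : ℝ × ℝ => u p.1 p.2) (x, y) (0, 1) :=
  (hasDerivAt_fderiv_snd hu x y).deriv

theorem hasDerivAt_diagonal (hu : Differentiable ℝ fun p : ℝ × ℝ => u p.1 p.2)
    (a b t : ℝ) :
    HasDerivAt (fun t => u (a + t) (b + t)) (pdx u (a + t) (b + t) + pdy u (a + t) (b + t)) t := by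
  have hline : HasDerivAt (fun t : ℝ => (a + t, b + t)) (1, 1) t :=
    ((hasDerivAt_id t).const_add a).prodMk ((hasDerivAt_id t).const_add b)
  have hdir : ((1, 1) : ℝ × ℝ) = (1, 0) + (0, 1) := by simp
  rw [pdx_eq_fderiv hu, pdy_eq_fderiv hu, ← map_add, ← hdir]
  exact (hu (a + t, b + t)).hasFDerivAt.comp_hasDerivAt t hline

theorem contDiff_pdx (hu : ContDiff ℝ n fun p : ℝ × ℝ => u p.1 p.2) (hmn : m + 1 ≤ n) :
    ContDiff ℝ m fun p : ℝ × ℝ => pdx u p.1 p.2 := by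
  have hd := (hu.of_le (le_add_self.trans hmn)).differentiable one_ne_zero
  simp only [pdx_eq_fderiv hd]
  exact (hu.fderiv_right hmn).clm_apply contDiff_const

theorem contDiff_pdy (hu : ContDiff ℝ n fun p : ℝ × ℝ => u p.1 p.2) (hmn : m + 1 ≤ n) :
    ContDiff ℝ m fun p : ℝ × ℝ => pdy u p.1 p.2 := by
  have hd := (hu.of_le (le_add_self.trans hmn)).differentiable one_ne_zero
  simp only [pdy_eq_fderiv hd]
  exact (hu.fderiv_right hmn).clm_apply contDiff_const

theorem hasDerivAt_pdxx (hu : ContDiff ℝ 2 fun p : ℝ × ℝ => u p.1 p.2) (x y : ℝ) :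
    HasDerivAt (fun t => pdx u t y) (pdxx u x y) x :=
  hasDerivAt_pdx ((contDiff_pdx hu one_add_one_eq_two.le).differentiable one_ne_zero) x y

theorem hasDerivAt_pdyy (hu : ContDiff ℝ 2 fun p : ℝ × ℝ => u p.1 p.2) (x y : ℝ) :
    HasDerivAt (fun t => pdy u x t) (pdyy u x y) y :=
  hasDerivAt_pdy ((contDiff_pdy hu one_add_one_eq_two.le).differentiable one_ne_zero) x y

theorem pdx_pdy_comm (hu : ContDiff ℝ 2 fun p : ℝ × ℝ => u p.1 p.2) :
    pdx (pdy u) = pdy (pdx u) := by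
  ext x y
  set U := fun p : ℝ × ℝ => u p.1 p.2 with hU
  have hd : Differentiable ℝ U := hu.differentiable two_ne_zero
  have hd' : DifferentiableAt ℝ (fderiv ℝ U) (x, y) :=
    (hu.fderiv_right one_add_one_eq_two.le).differentiable one_ne_zero _
  have hx : pdx (pdy u) x y = fderiv ℝ (fderiv ℝ U) (x, y) (1, 0) (0, 1) := by
    rw [pdx_eq_fderiv ((contDiff_pdy hu one_add_one_eq_two.le).differentiable one_ne_zero)]
    simp only [pdy_eq_fderiv hd]
    rw [fderiv_clm_apply hd' (differentiableAt_const _)]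
    simp [hU]
  have hy : pdy (pdx u) x y = fderiv ℝ (fderiv ℝ U) (x, y) (0, 1) (1, 0) := by
    rw [pdy_eq_fderiv ((contDiff_pdx hu one_add_one_eq_two.le).differentiable one_ne_zero)]
    simp only [pdx_eq_fderiv hd]
    rw [fderiv_clm_apply hd' (differentiableAt_const _)]
    simp [hU]
  rw [hx, hy]
  exact hu.contDiffAt.isSymmSndFDerivAt (by simp) _ _

/-- The operator `∂ₓₓ + ∂ᵧᵧ + c ∂ᵧ` of the travelling wave equation. -/
noncomputable def driftLaplacian (c : ℝ) (w : ℝ → ℝ → ℝ) (x y : ℝ) : ℝ :=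
  pdxx w x y + pdyy w x y + c * pdy w x y

theorem pdx_neg : pdx (fun x y => -u x y) = fun x y => -pdx u x y :=
  funext₂ fun x y => deriv.fun_neg (f := fun t => u t y) (x := x)

theorem pdy_neg : pdy (fun x y => -u x y) = fun x y => -pdy u x y :=
  funext₂ fun x y => deriv.fun_neg (f := fun t => u x t) (x := y)

theorem driftLaplacian_neg (c : ℝ) :
    driftLaplacian c (fun x y => -u x y) = fun x y => -driftLaplacian c u x y := by
  ext x y
  simp only [driftLaplacian, pdxx, pdyy, pdx_neg, pdy_neg, deriv.fun_neg]
  ring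

theorem pdx_const_add (a : ℝ) : pdx (fun x y => a + u x y) = pdx u :=
  funext₂ fun _ _ => deriv_const_add _

theorem pdy_const_add (a : ℝ) : pdy (fun x y => a + u x y) = pdy u :=
  funext₂ fun _ _ => deriv_const_add _

theorem driftLaplacian_const_add (c a : ℝ) :
    driftLaplacian c (fun x y => a + u x y) = driftLaplacian c u := by
  ext x y
  simp only [driftLaplacian, pdxx, pdyy, pdx_const_add, pdy_const_add]

end PartialDerivatives

/-! ### The comparison principle -/

theorem deriv_deriv_nonpos_of_isLocalMax {f f' : ℝ → ℝ} {f'' x : ℝ}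
    (hf : ∀ t, HasDerivAt f (f' t) t) (hf' : HasDerivAt f' f'' x) (h : IsLocalMax f x) :
    f'' ≤ 0 := by
  have hd : deriv f = f' := funext fun t => (hf t).deriv
  have hd0 : deriv f x = 0 := h.deriv_eq_zero
  by_contra! hpos
  have hmin : IsLocalMin f x :=
    isLocalMin_of_deriv_deriv_pos (by rwa [hd, hf'.deriv]) hd0 (hf x).continuousAt
  have hconst : f =ᶠ[𝓝 x] fun _ => f x := by
    filter_upwards [h, hmin] with t hle hge using le_antisymm hle hge
  have hflat : deriv f =ᶠ[𝓝 x] fun _ => 0 := by simpa using hconst.deriv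
  have hzero : f'' = 0 := by simpa [hd, hf'.deriv] using hflat.deriv_eq
  exact hpos.ne' hzero

/-- At a positive interior maximum of `v - φ - ψ` the operator cannot be strictly larger on `v`
than on the barrier. -/
theorem le_barrier_of_driftLaplacian_lt {v : ℝ → ℝ → ℝ} {φ φ' φ'' ψ ψ' ψ'' : ℝ → ℝ}
    {c a b a' b' x y : ℝ} (hv : ContDiff ℝ 2 fun p : ℝ × ℝ => v p.1 p.2)
    (hφ : ∀ s, HasDerivAt φ (φ' s) s) (hφ' : ∀ s, HasDerivAt φ' (φ'' s) s)
    (hψ : ∀ t, HasDerivAt ψ (ψ' t) t) (hψ' : ∀ t, HasDerivAt ψ' (ψ'' t) t)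
    (hbdry : ∀ s ∈ Set.Icc a b, ∀ t ∈ Set.Icc a' b', s = a ∨ s = b ∨ t = a' ∨ t = b' →
      v s t ≤ φ s + ψ t)
    (hL : ∀ s ∈ Set.Icc a b, ∀ t ∈ Set.Icc a' b', φ s + ψ t < v s t →
      φ'' s + ψ'' t + c * ψ' t < driftLaplacian c v s t)
    (hx : x ∈ Set.Icc a b) (hy : y ∈ Set.Icc a' b') : v x y ≤ φ x + ψ y := by
  have hd := hv.differentiable two_ne_zero
  have hcont : Continuous fun p : ℝ × ℝ => v p.1 p.2 - (φ p.1 + ψ p.2) := by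
    have hφc : Continuous φ := continuous_iff_continuousAt.2 fun s => (hφ s).continuousAt
    have hψc : Continuous ψ := continuous_iff_continuousAt.2 fun t => (hψ t).continuousAt
    exact hv.continuous.sub ((hφc.comp continuous_fst).add (hψc.comp continuous_snd))
  obtain ⟨⟨p, q⟩, ⟨hp, hq⟩, hmax⟩ := (isCompact_Icc.prod isCompact_Icc).exists_isMaxOn
    (s := Set.Icc a b ×ˢ Set.Icc a' b') ⟨(x, y), hx, hy⟩ hcont.continuousOn
  suffices hpq : v p q ≤ φ p + ψ q by
    have hxy : v x y - (φ x + ψ y) ≤ v p q - (φ p + ψ q) := hmax (Set.mk_mem_prod hx hy)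
    linarith
  by_contra! hpos
  have hint : p ≠ a ∧ p ≠ b ∧ q ≠ a' ∧ q ≠ b' := by
    by_contra! h
    exact hpos.not_ge (hbdry p hp q hq (by grind))
  have hmaxx : IsLocalMax (fun s => v s q - (φ s + ψ q)) p := by
    filter_upwards [Icc_mem_nhds (hp.1.lt_of_ne' hint.1) (hp.2.lt_of_ne hint.2.1)] with s hs
      using hmax (Set.mk_mem_prod hs hq)
  have hmaxy : IsLocalMax (fun t => v p t - (φ p + ψ t)) q := by
    filter_upwards [Icc_mem_nhds (hq.1.lt_of_ne' hint.2.2.1) (hq.2.lt_of_ne hint.2.2.2)] with t ht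
      using hmax (Set.mk_mem_prod hp ht)
  have hdy : ∀ t, HasDerivAt (fun t => v p t - (φ p + ψ t)) (pdy v p t - ψ' t) t :=
    fun t => (hasDerivAt_pdy hd p t).sub ((hψ t).const_add _)
  have hyy := deriv_deriv_nonpos_of_isLocalMax hdy ((hasDerivAt_pdyy hv p q).sub (hψ' q)) hmaxy
  have hxx := deriv_deriv_nonpos_of_isLocalMax
    (fun s => (hasDerivAt_pdx hd s q).sub ((hφ s).add_const _))
    ((hasDerivAt_pdxx hv p q).sub (hφ' p)) hmaxx
  have hcrit : pdy v p q = ψ' q := sub_eq_zero.1 (hmaxy.hasDerivAt_eq_zero (hdy q))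
  have hlt := hL p hp q hq hpos
  rw [driftLaplacian, hcrit] at hlt
  linarith

/-! ### Interior gradient estimates -/

theorem hasDerivAt_le_of_forall_le_mul {h : ℝ → ℝ} {h' a : ℝ} (hd : HasDerivAt h h' 0)
    (h0 : h 0 = 0) (hle : ∀ s ∈ Set.Icc (0 : ℝ) 1, h s ≤ a * s) : h' ≤ a := by
  refine le_of_tendsto hd.tendsto_slope_zero_right ?_
  filter_upwards [Ioc_mem_nhdsGT (zero_lt_one' ℝ)] with s hs
  rw [zero_add, h0, sub_zero, smul_eq_mul, inv_mul_le_iff₀ hs.1, mul_comm]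
  exact hle s ⟨hs.1.le, hs.2⟩

/-- The odd part of `v` in `x` about the line `x = x₀`, in the coordinate `s = x - x₀`. -/
noncomputable def oddPart (x₀ : ℝ) (v : ℝ → ℝ → ℝ) (s t : ℝ) : ℝ :=
  (v (x₀ + s) t - v (x₀ - s) t) / 2

section GradientBound

variable {v : ℝ → ℝ → ℝ} {x₀ y₀ M N : ℝ}

theorem contDiff_oddPart (hv : ContDiff ℝ 2 fun p : ℝ × ℝ => v p.1 p.2) :
    ContDiff ℝ 2 fun p : ℝ × ℝ => oddPart x₀ v p.1 p.2 := by
  have hplus : ContDiff ℝ 2 fun p : ℝ × ℝ => v (x₀ + p.1) p.2 :=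
    hv.comp (f := fun p : ℝ × ℝ => (x₀ + p.1, p.2)) (by fun_prop)
  have hminus : ContDiff ℝ 2 fun p : ℝ × ℝ => v (x₀ - p.1) p.2 :=
    hv.comp (f := fun p : ℝ × ℝ => (x₀ - p.1, p.2)) (by fun_prop)
  exact (hplus.sub hminus).div_const 2

theorem pdx_oddPart (hv : ContDiff ℝ 2 fun p : ℝ × ℝ => v p.1 p.2) :
    pdx (oddPart x₀ v) = fun s t => (pdx v (x₀ + s) t + pdx v (x₀ - s) t) / 2 := by
  have hd := hv.differentiable two_ne_zero
  ext s t
  have h := (((hasDerivAt_pdx hd (x₀ + s) t).comp_const_add x₀ s).sub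
    ((hasDerivAt_pdx hd (x₀ - s) t).comp_const_sub x₀ s)).div_const 2
  exact h.deriv.trans (by ring)

theorem driftLaplacian_oddPart (hv : ContDiff ℝ 2 fun p : ℝ × ℝ => v p.1 p.2) (c : ℝ) :
    driftLaplacian c (oddPart x₀ v) = oddPart x₀ (driftLaplacian c v) := by
  have hd := hv.differentiable two_ne_zero
  ext s t
  have hxx : pdxx (oddPart x₀ v) s t = (pdxx v (x₀ + s) t - pdxx v (x₀ - s) t) / 2 := by
    have h := (((hasDerivAt_pdxx hv (x₀ + s) t).comp_const_add x₀ s).add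
      ((hasDerivAt_pdxx hv (x₀ - s) t).comp_const_sub x₀ s)).div_const 2
    simp only [pdxx, pdx_oddPart hv]
    exact h.deriv.trans (by rw [pdxx, pdxx]; ring)
  have hy : pdy (oddPart x₀ v) = oddPart x₀ (pdy v) := funext₂ fun s t =>
    (((hasDerivAt_pdy hd (x₀ + s) t).sub (hasDerivAt_pdy hd (x₀ - s) t)).div_const 2).deriv
  have hyy : pdyy (oddPart x₀ v) s t = oddPart x₀ (pdyy v) s t := by
    simp only [pdyy, hy]
    exact (((hasDerivAt_pdyy hv (x₀ + s) t).sub (hasDerivAt_pdyy hv (x₀ - s) t)).div_const 2).deriv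
  rw [driftLaplacian, hxx, hyy, hy]
  simp only [oddPart, driftLaplacian]
  ring

theorem abs_oddPart_le {s t : ℝ} (hs : s ∈ Set.Icc (0 : ℝ) 1)
    (hM : ∀ x, |x - x₀| ≤ 1 → |v x t| ≤ M) : |oddPart x₀ v s t| ≤ M := by
  have hs' : |s| ≤ 1 := abs_le.2 ⟨by linarith [hs.1], hs.2⟩
  have hplus := abs_le.1 (hM (x₀ + s) (by simpa using hs'))
  have hminus := abs_le.1 (hM (x₀ - s) (by simpa using hs'))
  exact abs_le.2 ⟨by rw [oddPart]; linarith, by rw [oddPart]; linarith⟩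

/-- The barrier is `(N + 3M) s - (N + 2M) s² + M (t - y₀)²`. -/
theorem le_mul_of_abs_laplacian_le (hv : ContDiff ℝ 2 fun p : ℝ × ℝ => v p.1 p.2) (hM0 : 0 < M)
    (hM : ∀ s ∈ Set.Icc (0 : ℝ) 1, ∀ t, |t - y₀| ≤ 1 → |v s t| ≤ M)
    (hN : ∀ s ∈ Set.Icc (0 : ℝ) 1, ∀ t, |t - y₀| ≤ 1 → |driftLaplacian 0 v s t| ≤ N)
    (h0 : ∀ t, v 0 t = 0) {s : ℝ} (hs : s ∈ Set.Icc (0 : ℝ) 1) : v s y₀ ≤ (N + 3 * M) * s := by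
  have hN0 : 0 ≤ N := (abs_nonneg _).trans (hN s hs y₀ (by simp))
  have habs : ∀ t ∈ Set.Icc (y₀ - 1) (y₀ + 1), |t - y₀| ≤ 1 := fun t ht =>
    abs_le.2 ⟨by linarith [ht.1], by linarith [ht.2]⟩
  have hbarrier := le_barrier_of_driftLaplacian_lt (c := 0) (a := 0) (b := 1) (a' := y₀ - 1)
    (b' := y₀ + 1) (x := s) (y := y₀) (φ := fun s => (N + 3 * M) * s - (N + 2 * M) * s ^ 2)
    (φ' := fun s => (N + 3 * M) - (N + 2 * M) * (2 * s)) (φ'' := fun _ => -(2 * (N + 2 * M)))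
    (ψ := fun t => M * (t - y₀) ^ 2) (ψ' := fun t => M * (2 * (t - y₀))) (ψ'' := fun _ => M * 2)
    hv ?_ ?_ ?_ ?_ ?_ ?_ hs ⟨by linarith, by linarith⟩
  · simp only [sub_self] at hbarrier
    nlinarith [mul_nonneg (by positivity : 0 ≤ N + 2 * M) (sq_nonneg s)]
  · intro s
    refine (((hasDerivAt_id s).const_mul (N + 3 * M)).sub
      (((hasDerivAt_id s).pow 2).const_mul (N + 2 * M))).congr_deriv ?_
    simp
  · intro s
    refine ((((hasDerivAt_id s).const_mul 2).const_mul (N + 2 * M)).const_sub _).congr_deriv ?_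
    ring
  · intro t
    simpa using (((hasDerivAt_id t).sub_const y₀).pow 2).const_mul M
  · intro t
    simpa using (((hasDerivAt_id t).sub_const y₀).const_mul 2).const_mul M
  · rintro s hs t ht hst
    have hvM := (abs_le.1 (hM s hs t (habs t ht))).2
    have hquad : 0 ≤ (N + 2 * M) * (s * (1 - s)) :=
      mul_nonneg (by positivity) (mul_nonneg hs.1 (by linarith [hs.2]))
    have hlin : 0 ≤ M * s := mul_nonneg hM0.le hs.1
    have hsq : 0 ≤ M * (t - y₀) ^ 2 := by positivity
    rcases hst with rfl | rfl | rfl | rfl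
    · simpa [h0] using hsq
    all_goals linarith
  · intro s hs t ht _
    linarith [(abs_le.1 (hN s hs t (habs t ht))).1]

theorem pdx_le_of_abs_laplacian_le (hv : ContDiff ℝ 2 fun p : ℝ × ℝ => v p.1 p.2) (hM0 : 0 < M)
    (hM : ∀ x y, |x - x₀| ≤ 1 → |y - y₀| ≤ 1 → |v x y| ≤ M)
    (hN : ∀ x y, |x - x₀| ≤ 1 → |y - y₀| ≤ 1 → |driftLaplacian 0 v x y| ≤ N) :
    pdx v x₀ y₀ ≤ N + 3 * M := by
  have hodd := contDiff_oddPart (x₀ := x₀) hv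
  have hslope : pdx (oddPart x₀ v) 0 y₀ = pdx v x₀ y₀ := by
    simp [pdx_oddPart hv]
  rw [← hslope]
  refine hasDerivAt_le_of_forall_le_mul
    (hasDerivAt_pdx (hodd.differentiable two_ne_zero) 0 y₀) (by simp [oddPart]) fun s hs =>
    le_mul_of_abs_laplacian_le hodd hM0
      (fun s hs t ht => abs_oddPart_le hs fun x hx => hM x t hx ht) (fun s hs t ht => ?_)
      (fun t => by simp [oddPart]) hs
  rw [driftLaplacian_oddPart hv]
  exact abs_oddPart_le hs fun x hx => hN x t hx ht

theorem abs_pdx_le_of_abs_laplacian_le (hv : ContDiff ℝ 2 fun p : ℝ × ℝ => v p.1 p.2)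
    (hM0 : 0 < M) (hM : ∀ x y, |x - x₀| ≤ 1 → |y - y₀| ≤ 1 → |v x y| ≤ M)
    (hN : ∀ x y, |x - x₀| ≤ 1 → |y - y₀| ≤ 1 → |driftLaplacian 0 v x y| ≤ N) :
    |pdx v x₀ y₀| ≤ N + 3 * M := by
  have hneg := pdx_le_of_abs_laplacian_le (v := fun x y => -v x y) hv.neg hM0 (by simpa using hM)
    (by simpa [driftLaplacian_neg] using hN)
  rw [pdx_neg] at hneg
  exact abs_le'.2 ⟨pdx_le_of_abs_laplacian_le hv hM0 hM hN, hneg⟩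

theorem abs_pdy_le_of_abs_laplacian_le (hv : ContDiff ℝ 2 fun p : ℝ × ℝ => v p.1 p.2)
    (hM0 : 0 < M) (hM : ∀ x y, |x - x₀| ≤ 1 → |y - y₀| ≤ 1 → |v x y| ≤ M)
    (hN : ∀ x y, |x - x₀| ≤ 1 → |y - y₀| ≤ 1 → |driftLaplacian 0 v x y| ≤ N) :
    |pdy v x₀ y₀| ≤ N + 3 * M := by
  have hswap : ∀ x y, driftLaplacian 0 (fun s t => v t s) x y = driftLaplacian 0 v y x :=
    fun x y => by
      have hxx : pdxx (fun s t => v t s) x y = pdyy v y x := rfl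
      have hyy : pdyy (fun s t => v t s) x y = pdxx v y x := rfl
      simp only [driftLaplacian, hxx, hyy, zero_mul, add_zero, add_comm]
  refine abs_pdx_le_of_abs_laplacian_le (v := fun s t => v t s) (x₀ := y₀) (y₀ := x₀)
    (hv.comp (f := fun p : ℝ × ℝ => (p.2, p.1)) (by fun_prop)) hM0
    (fun x y hx hy => hM y x hy hx) fun x y hx hy => ?_
  rw [hswap]
  exact hN y x hy hx

/-- The product `exp (c (y - y₀) / 2) v`, which turns `∂ₓₓ + ∂ᵧᵧ + c ∂ᵧ - c² / 4` into the
Laplacian. -/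
noncomputable def driftConjugate (c y₀ : ℝ) (v : ℝ → ℝ → ℝ) (x y : ℝ) : ℝ :=
  exp (c / 2 * (y - y₀)) * v x y

theorem contDiff_driftConjugate (hv : ContDiff ℝ 2 fun p : ℝ × ℝ => v p.1 p.2) (c : ℝ) :
    ContDiff ℝ 2 fun p : ℝ × ℝ => driftConjugate c y₀ v p.1 p.2 := by
  unfold driftConjugate
  fun_prop

theorem pdx_driftConjugate (c : ℝ) :
    pdx (driftConjugate c y₀ v) = driftConjugate c y₀ (pdx v) :=
  funext₂ fun _ y => congrFun (deriv_const_mul_field' (exp (c / 2 * (y - y₀)))) _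

theorem pdy_driftConjugate (hv : Differentiable ℝ fun p : ℝ × ℝ => v p.1 p.2) (c : ℝ) :
    pdy (driftConjugate c y₀ v) =
      driftConjugate c y₀ fun x y => pdy v x y + c / 2 * v x y := by
  ext x y
  have hexp :
      HasDerivAt (fun y => exp (c / 2 * (y - y₀))) (exp (c / 2 * (y - y₀)) * (c / 2)) y := by
    simpa using (((hasDerivAt_id y).sub_const y₀).const_mul (c / 2)).exp
  refine (hexp.mul (hasDerivAt_pdy hv x y)).deriv.trans ?_
  rw [driftConjugate]
  ring

theorem driftLaplacian_driftConjugate (hv : ContDiff ℝ 2 fun p : ℝ × ℝ => v p.1 p.2) (c : ℝ) :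
    driftLaplacian 0 (driftConjugate c y₀ v) =
      driftConjugate c y₀ fun x y => driftLaplacian c v x y + c ^ 2 / 4 * v x y := by
  have hd := hv.differentiable two_ne_zero
  have hd' := (contDiff_pdy hv one_add_one_eq_two.le).differentiable one_ne_zero
  ext x y
  have hxx : pdxx (driftConjugate c y₀ v) x y = driftConjugate c y₀ (pdxx v) x y := by
    simp only [pdxx, pdx_driftConjugate]
    exact congrFun₂ (pdx_driftConjugate c) x y
  have hyy : pdyy (driftConjugate c y₀ v) x y = driftConjugate c y₀
      (fun x y => pdyy v x y + c / 2 * pdy v x y + c / 2 * (pdy v x y + c / 2 * v x y)) x y := by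
    have hfirst : pdy (fun x y => pdy v x y + c / 2 * v x y) x y = pdyy v x y + c / 2 * pdy v x y :=
      ((hasDerivAt_pdyy hv x y).add ((hasDerivAt_pdy hd x y).const_mul (c / 2))).deriv
    have hsecond := congrFun₂ (pdy_driftConjugate (y₀ := y₀)
      (v := fun x y => pdy v x y + c / 2 * v x y) (hd'.add (hd.const_mul (c / 2))) c) x y
    simp only [pdyy, pdy_driftConjugate hd]
    exact hsecond.trans (by simp only [driftConjugate, hfirst, pdyy])
  rw [driftLaplacian, hxx, hyy]
  simp only [driftConjugate, driftLaplacian]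
  ring

theorem abs_driftConjugate_le {c x y : ℝ} (hM : |v x y| ≤ M) (hy : |y - y₀| ≤ 1) :
    |driftConjugate c y₀ v x y| ≤ exp (|c| / 2) * M := by
  have hexp : c / 2 * (y - y₀) ≤ |c| / 2 :=
    calc c / 2 * (y - y₀) ≤ |c / 2| * |y - y₀| := (le_abs_self _).trans (abs_mul _ _).le
      _ ≤ |c / 2| * 1 := by gcongr
      _ = |c| / 2 := by rw [mul_one, abs_div, abs_two]
  rw [driftConjugate, abs_mul, abs_exp]
  gcongr

theorem exists_gradient_bound (c : ℝ) : ∃ C > 0, ∀ v : ℝ → ℝ → ℝ,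
    ContDiff ℝ 2 (fun p : ℝ × ℝ => v p.1 p.2) → ∀ x₀ y₀ M N : ℝ, 0 < M →
    (∀ x y, |x - x₀| ≤ 1 → |y - y₀| ≤ 1 → |v x y| ≤ M) →
    (∀ x y, |x - x₀| ≤ 1 → |y - y₀| ≤ 1 → |driftLaplacian c v x y| ≤ N) →
    |pdx v x₀ y₀| ≤ C * (M + N) ∧ |pdy v x₀ y₀| ≤ C * (M + N) := by
  set E := exp (|c| / 2)
  have : 0 < E := exp_pos _
  refine ⟨E * (c ^ 2 / 4 + 3) + |c| / 2, by positivity, fun v hv x₀ y₀ M N hM0 hM hN => ?_⟩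
  have hN0 : 0 ≤ N := (abs_nonneg _).trans (hN x₀ y₀ (by simp) (by simp))
  have hd := hv.differentiable two_ne_zero
  have hconj := contDiff_driftConjugate (y₀ := y₀) hv c
  have hconjM : ∀ x y, |x - x₀| ≤ 1 → |y - y₀| ≤ 1 → |driftConjugate c y₀ v x y| ≤ E * M :=
    fun x y hx hy => abs_driftConjugate_le (hM x y hx hy) hy
  have hconjN : ∀ x y, |x - x₀| ≤ 1 → |y - y₀| ≤ 1 →
      |driftLaplacian 0 (driftConjugate c y₀ v) x y| ≤ E * (N + c ^ 2 / 4 * M) := by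
    intro x y hx hy
    rw [driftLaplacian_driftConjugate hv]
    refine abs_driftConjugate_le ((abs_add_le _ _).trans ?_) hy
    rw [abs_mul, abs_of_nonneg (by positivity : 0 ≤ c ^ 2 / 4)]
    gcongr
    exacts [hN x y hx hy, hM x y hx hy]
  have hconst : E * (N + c ^ 2 / 4 * M) + 3 * (E * M) + |c| / 2 * M ≤
      (E * (c ^ 2 / 4 + 3) + |c| / 2) * (M + N) := by
    have : 0 ≤ (E * (c ^ 2 / 4 + 2) + |c| / 2) * N := by positivity
    linarith
  have hdx := abs_pdx_le_of_abs_laplacian_le hconj (by positivity) hconjM hconjN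
  have hdy := abs_pdy_le_of_abs_laplacian_le hconj (by positivity) hconjM hconjN
  simp only [pdx_driftConjugate, pdy_driftConjugate hd, driftConjugate, sub_self, mul_zero,
    exp_zero, one_mul] at hdx hdy
  have hv₀ : |c / 2 * v x₀ y₀| ≤ |c| / 2 * M := by
    rw [abs_mul, abs_div, abs_two]
    gcongr
    exact hM x₀ y₀ (by simp) (by simp)
  constructor
  · have : 0 ≤ |c| / 2 * M := by positivity
    linarith
  · have := abs_sub (pdy v x₀ y₀ + c / 2 * v x₀ y₀) (c / 2 * v x₀ y₀)
    rw [add_sub_cancel_right] at this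
    linarith

end GradientBound

/-! ### Exponential smallness at the centre of a square -/

theorem inv_cosh_le (z : ℝ) : (cosh z)⁻¹ ≤ 2 * exp (-z) := by
  rw [inv_le_iff_one_le_mul₀ (cosh_pos z), cosh_eq]
  have hexp : exp (-z) * exp z = 1 := by rw [← exp_add, neg_add_cancel, exp_zero]
  nlinarith [exp_pos (-z)]

theorem hasDerivAt_mul_cosh (A k z s : ℝ) :
    HasDerivAt (fun s => A * cosh (k * (s - z))) (A * k * sinh (k * (s - z))) s := by
  refine (((((hasDerivAt_id s).sub_const z).const_mul k).cosh).const_mul A).congr_deriv ?_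
  simp only [id_eq]
  ring

theorem hasDerivAt_mul_sinh (A k z s : ℝ) :
    HasDerivAt (fun s => A * k * sinh (k * (s - z))) (k ^ 2 * (A * cosh (k * (s - z)))) s := by
  refine (((((hasDerivAt_id s).sub_const z).const_mul k).sinh).const_mul (A * k)).congr_deriv ?_
  simp only [id_eq]
  ring

theorem cosh_barrier_le {A c k : ℝ} (hA : 0 ≤ A) (hc : 0 ≤ c) (hk : 0 ≤ k) (a b : ℝ) :
    k ^ 2 * (A * cosh a) + k ^ 2 * (A * cosh b) + c * (A * k * sinh b) ≤
      (k ^ 2 + c * k) * (A * cosh a + A * cosh b) := by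
  have hsinh : c * k * A * sinh b ≤ c * k * A * cosh b :=
    mul_le_mul_of_nonneg_left (sinh_lt_cosh b).le (by positivity)
  have hcosh : 0 ≤ c * k * (A * cosh a) := by positivity
  linarith

/-- The barrier is `(cosh (k (x - x₀)) + cosh (k (y - y₀))) / cosh (k r)`. -/
theorem le_exp_of_mul_le_driftLaplacian {v : ℝ → ℝ → ℝ}
    (hv : ContDiff ℝ 2 fun p : ℝ × ℝ => v p.1 p.2) {c μ k r x₀ y₀ : ℝ} (hc : 0 ≤ c) (hμ : 0 < μ)
    (hk : 0 ≤ k) (hkμ : k ^ 2 + c * k ≤ μ) (hr : 0 ≤ r)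
    (hv1 : ∀ x y, |x - x₀| ≤ r → |y - y₀| ≤ r → v x y ≤ 1)
    (hL : ∀ x y, |x - x₀| ≤ r → |y - y₀| ≤ r → μ * v x y ≤ driftLaplacian c v x y) :
    v x₀ y₀ ≤ 4 * exp (-(k * r)) := by
  set A := (cosh (k * r))⁻¹ with hA
  have hA0 : 0 < A := inv_pos.2 (cosh_pos _)
  have hbdry (s z : ℝ) (hs : s = z - r ∨ s = z + r) : A * cosh (k * (s - z)) = 1 := by
    rcases hs with rfl | rfl
    · rw [sub_sub_cancel_left, mul_neg, cosh_neg, hA, inv_mul_cancel₀ (cosh_pos _).ne']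
    · rw [add_sub_cancel_left, hA, inv_mul_cancel₀ (cosh_pos _).ne']
  have hpos (z s : ℝ) : 0 < A * cosh (k * (s - z)) := mul_pos hA0 (cosh_pos _)
  have habs {s z : ℝ} (hs : s ∈ Set.Icc (z - r) (z + r)) : |s - z| ≤ r :=
    abs_le.2 ⟨by linarith [hs.1], by linarith [hs.2]⟩
  have hbarrier : v x₀ y₀ ≤ A * cosh (k * (x₀ - x₀)) + A * cosh (k * (y₀ - y₀)) := by
    refine le_barrier_of_driftLaplacian_lt (c := c) (a := x₀ - r) (b := x₀ + r) (a' := y₀ - r)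
      (b' := y₀ + r) hv (hasDerivAt_mul_cosh A k x₀) (hasDerivAt_mul_sinh A k x₀)
      (hasDerivAt_mul_cosh A k y₀) (hasDerivAt_mul_sinh A k y₀) (fun s hs t ht hst => ?_)
      (fun s hs t ht hlt => ?_) ⟨by linarith, by linarith⟩ ⟨by linarith, by linarith⟩
    · have hvst := hv1 s t (habs hs) (habs ht)
      rcases or_assoc.2 hst with h | h
      · linarith [hbdry s x₀ h, hpos y₀ t]
      · linarith [hbdry t y₀ h, hpos x₀ s]
    · calc _ ≤ (k ^ 2 + c * k) * (A * cosh (k * (s - x₀)) + A * cosh (k * (t - y₀))) :=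
            cosh_barrier_le hA0.le hc hk _ _
        _ ≤ μ * (A * cosh (k * (s - x₀)) + A * cosh (k * (t - y₀))) :=
            mul_le_mul_of_nonneg_right hkμ (add_pos (hpos x₀ s) (hpos y₀ t)).le
        _ < μ * v s t := mul_lt_mul_of_pos_left hlt hμ
        _ ≤ driftLaplacian c v s t := hL s t (habs hs) (habs ht)
  rw [sub_self, sub_self, mul_zero, cosh_zero] at hbarrier
  linarith [inv_cosh_le (k * r)]

/-! ### The potential -/

/-- A `C²` double-well potential with equal minima `0` at `±1` and its only other critical point in
`[-1, 1]` at `0`. Only the well at `-1` is required to be nondegenerate. -/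
structure BalancedPotential (F : ℝ → ℝ) : Prop where
  contDiff : ContDiff ℝ 2 F
  deriv_neg_one : deriv F (-1) = 0
  deriv_deriv_neg_one_pos : 0 < deriv (deriv F) (-1)
  deriv_pos : ∀ s ∈ Set.Ioo (-1 : ℝ) 0, 0 < deriv F s
  deriv_neg : ∀ s ∈ Set.Ioo (0 : ℝ) 1, deriv F s < 0
  apply_neg_one : F (-1) = 0
  apply_one : F 1 = 0

theorem BalancedDoubleWell.balancedPotential {F : ℝ → ℝ} (hF : BalancedDoubleWell F) :
    BalancedPotential F := by
  obtain ⟨hC, hneg, -, hneg2, -, hpos, hneg', h1, h2⟩ := hF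
  exact ⟨hC.of_le (by norm_num), hneg, hneg2, hpos, hneg', h1, h2⟩

section ContDiffTwo

variable {f : ℝ → ℝ}

theorem contDiff_deriv_of_two (hf : ContDiff ℝ 2 f) : ContDiff ℝ 1 (deriv f) :=
  (contDiff_succ_iff_deriv.1 (one_add_one_eq_two (R := WithTop ℕ∞) ▸ hf)).2.2

theorem continuous_deriv_deriv (hf : ContDiff ℝ 2 f) : Continuous (deriv (deriv f)) :=
  (contDiff_deriv_of_two hf).continuous_deriv le_rfl

theorem hasDerivAt_deriv_deriv (hf : ContDiff ℝ 2 f) (s : ℝ) :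
    HasDerivAt (deriv f) (deriv (deriv f) s) s :=
  ((contDiff_deriv_of_two hf).differentiable one_ne_zero s).hasDerivAt

theorem exists_forall_abs_le (hf : Continuous f) (a b : ℝ) :
    ∃ K > 0, ∀ s ∈ Set.Icc a b, |f s| ≤ K := by
  obtain ⟨K, hK⟩ := isCompact_Icc.exists_bound_of_continuousOn (s := Set.Icc a b) hf.continuousOn
  exact ⟨|K| + 1, by positivity, fun s hs => (hK s hs).trans (by linarith [le_abs_self K])⟩

theorem exists_forall_abs_le_mul_sub (hf : ContDiff ℝ 1 f) {a : ℝ} (ha : f a = 0) (b : ℝ) :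
    ∃ K > 0, ∀ s ∈ Set.Icc a b, |f s| ≤ K * (s - a) := by
  obtain ⟨K, hK, hbound⟩ := exists_forall_abs_le (hf.continuous_deriv le_rfl) a b
  refine ⟨K, hK, fun s hs => ?_⟩
  have hmvt := (convex_Icc a b).norm_image_sub_le_of_norm_deriv_le
    (fun t _ => hf.differentiable one_ne_zero t) hbound (Set.left_mem_Icc.2 (hs.1.trans hs.2)) hs
  rwa [ha, sub_zero, Real.norm_eq_abs, Real.norm_eq_abs, abs_of_nonneg (sub_nonneg.2 hs.1)] at hmvt

end ContDiffTwo

namespace BalancedPotential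

variable {F : ℝ → ℝ}

theorem differentiable (hF : BalancedPotential F) : Differentiable ℝ F :=
  hF.contDiff.differentiable two_ne_zero

theorem continuous (hF : BalancedPotential F) : Continuous F := hF.contDiff.continuous

theorem strictMonoOn (hF : BalancedPotential F) : StrictMonoOn F (Set.Icc (-1) 0) :=
  strictMonoOn_of_deriv_pos (convex_Icc _ _) hF.continuous.continuousOn fun s hs =>
    hF.deriv_pos s (interior_Icc (a := (-1 : ℝ)) ▸ hs)

theorem strictAntiOn (hF : BalancedPotential F) : StrictAntiOn F (Set.Icc 0 1) :=
  strictAntiOn_of_deriv_neg (convex_Icc _ _) hF.continuous.continuousOn fun s hs =>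
    hF.deriv_neg s (interior_Icc (a := (0 : ℝ)) ▸ hs)

theorem pos_of_mem_Ioc (hF : BalancedPotential F) {s : ℝ} (hs : s ∈ Set.Ioc (-1 : ℝ) 0) :
    0 < F s :=
  hF.apply_neg_one ▸ hF.strictMonoOn (by simp) ⟨hs.1.le, hs.2⟩ hs.1

theorem min_le_of_mem_Icc (hF : BalancedPotential F) {a b s : ℝ} (ha : -1 ≤ a) (hb : b ≤ 1)
    (hs : s ∈ Set.Icc a b) : min (F a) (F b) ≤ F s := by
  rcases le_total s 0 with h | h
  · exact min_le_of_left_le (hF.strictMonoOn.monotoneOn ⟨ha, hs.1.trans h⟩ ⟨ha.trans hs.1, h⟩ hs.1)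
  · exact min_le_of_right_le (hF.strictAntiOn.antitoneOn ⟨h, hs.2.trans hb⟩ ⟨h.trans hs.2, hb⟩ hs.2)

theorem nonneg (hF : BalancedPotential F) {s : ℝ} (hs : s ∈ Set.Icc (-1 : ℝ) 1) : 0 ≤ F s := by
  simpa [hF.apply_neg_one, hF.apply_one] using hF.min_le_of_mem_Icc le_rfl le_rfl hs

theorem exists_mul_le_deriv (hF : BalancedPotential F) : ∃ μ > 0, ∃ δ > 0, δ < 1 ∧
    ∀ s ∈ Set.Icc (-1 : ℝ) (-1 + δ), μ * (s + 1) ≤ deriv F s := by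
  set μ := deriv (deriv F) (-1) / 2 with hμ
  have hμ0 : 0 < μ := half_pos hF.deriv_deriv_neg_one_pos
  have hslope : ∀ᶠ s in 𝓝[>] (-1 : ℝ), μ < slope (deriv F) (-1) s :=
    ((hasDerivAt_iff_tendsto_slope.1 (hasDerivAt_deriv_deriv hF.contDiff (-1))).mono_left
      (nhdsGT_le_nhdsNE _)).eventually_const_lt (by linarith)
  obtain ⟨b, hb, hsub⟩ := mem_nhdsGT_iff_exists_Ioc_subset.1 hslope
  have hb' : 0 < b + 1 := by linarith [Set.mem_Ioi.1 hb]
  refine ⟨μ, hμ0, min (b + 1) (1 / 2), by positivity,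
    (min_le_right _ _).trans_lt (by norm_num), fun s hs => ?_⟩
  rcases hs.1.eq_or_lt with rfl | hlt
  · simp [hF.deriv_neg_one]
  have hs' : μ < slope (deriv F) (-1) s :=
    hsub ⟨hlt, by linarith [hs.2, min_le_left (b + 1) (1 / 2)]⟩
  rw [slope_def_field, hF.deriv_neg_one, sub_zero, sub_neg_eq_add,
    lt_div_iff₀ (by linarith)] at hs'
  exact hs'.le

end BalancedPotential

/-! ### Regularity of solutions -/

/-- A common bound for all first and second partial derivatives of `u`; the other mixed derivative
agrees with the one listed when `u` is `C²`. -/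
structure DerivBound (u : ℝ → ℝ → ℝ) (C : ℝ) : Prop where
  pos : 0 < C
  dx : ∀ x y, |pdx u x y| ≤ C
  dy : ∀ x y, |pdy u x y| ≤ C
  dxx : ∀ x y, |pdxx u x y| ≤ C
  dxy : ∀ x y, |pdx (pdy u) x y| ≤ C
  dyy : ∀ x y, |pdyy u x y| ≤ C

namespace IsSolution

variable {F : ℝ → ℝ} {c : ℝ} {u : ℝ → ℝ → ℝ}

theorem contDiff_three (hu : IsSolution F c u) : ContDiff ℝ 3 fun p : ℝ × ℝ => u p.1 p.2 := hu.1

theorem contDiff_two (hu : IsSolution F c u) : ContDiff ℝ 2 fun p : ℝ × ℝ => u p.1 p.2 :=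
  hu.contDiff_three.of_le (by norm_num)

theorem differentiable (hu : IsSolution F c u) : Differentiable ℝ fun p : ℝ × ℝ => u p.1 p.2 :=
  hu.contDiff_two.differentiable two_ne_zero

theorem equation (hu : IsSolution F c u) (x y : ℝ) :
    pdxx u x y + pdyy u x y + c * pdy u x y = deriv F (u x y) :=
  hu.2.1 x y

theorem mem_Icc (hu : IsSolution F c u) (x y : ℝ) : u x y ∈ Set.Icc (-1 : ℝ) 1 :=
  abs_le.1 (hu.2.2.1 x y)

theorem dy_pos (hu : IsSolution F c u) (x y : ℝ) : 0 < pdy u x y := hu.2.2.2 x y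

theorem strictMono (hu : IsSolution F c u) (x : ℝ) : StrictMono fun y => u x y :=
  strictMono_of_deriv_pos (hu.dy_pos x)

theorem contDiff_dx (hu : IsSolution F c u) : ContDiff ℝ 2 fun p : ℝ × ℝ => pdx u p.1 p.2 :=
  contDiff_pdx hu.contDiff_three (by norm_num)

theorem contDiff_dy (hu : IsSolution F c u) : ContDiff ℝ 2 fun p : ℝ × ℝ => pdy u p.1 p.2 :=
  contDiff_pdy hu.contDiff_three (by norm_num)

theorem hasDerivAt_dx (hu : IsSolution F c u) (x y : ℝ) :
    HasDerivAt (fun t => u t y) (pdx u x y) x :=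
  hasDerivAt_pdx hu.differentiable x y

theorem hasDerivAt_dy (hu : IsSolution F c u) (x y : ℝ) :
    HasDerivAt (fun t => u x t) (pdy u x y) y :=
  hasDerivAt_pdy hu.differentiable x y

theorem hasDerivAt_dxx (hu : IsSolution F c u) (x y : ℝ) :
    HasDerivAt (fun t => pdx u t y) (pdxx u x y) x :=
  hasDerivAt_pdxx hu.contDiff_two x y

theorem hasDerivAt_dyy (hu : IsSolution F c u) (x y : ℝ) :
    HasDerivAt (fun t => pdy u x t) (pdyy u x y) y :=
  hasDerivAt_pdyy hu.contDiff_two x y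

theorem driftLaplacian_dx (hF : ContDiff ℝ 2 F) (hu : IsSolution F c u) (x y : ℝ) :
    driftLaplacian c (pdx u) x y = deriv (deriv F) (u x y) * pdx u x y := by
  have hdxx := (contDiff_pdx hu.contDiff_dx one_add_one_eq_two.le).differentiable one_ne_zero
  have hdyy := (contDiff_pdy hu.contDiff_dy one_add_one_eq_two.le).differentiable one_ne_zero
  have hcomm : pdx (pdy (pdy u)) = pdy (pdy (pdx u)) := by
    rw [pdx_pdy_comm hu.contDiff_dy, pdx_pdy_comm hu.contDiff_two]
  have hleft := ((hasDerivAt_pdx hdxx x y).add (hasDerivAt_pdx hdyy x y)).add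
    ((hasDerivAt_pdx (hu.contDiff_dy.differentiable two_ne_zero) x y).const_mul c)
  rw [hcomm, pdx_pdy_comm hu.contDiff_two] at hleft
  have hright := (hasDerivAt_deriv_deriv hF (u x y)).comp x (hu.hasDerivAt_dx x y)
  exact hleft.unique (hright.congr_of_eventuallyEq (.of_forall fun t => hu.equation t y))

theorem driftLaplacian_dy (hF : ContDiff ℝ 2 F) (hu : IsSolution F c u) (x y : ℝ) :
    driftLaplacian c (pdy u) x y = deriv (deriv F) (u x y) * pdy u x y := by
  have hdxx := (contDiff_pdx hu.contDiff_dx one_add_one_eq_two.le).differentiable one_ne_zero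
  have hdyy := (contDiff_pdy hu.contDiff_dy one_add_one_eq_two.le).differentiable one_ne_zero
  have hcomm : pdy (pdx (pdx u)) = pdx (pdx (pdy u)) := by
    rw [← pdx_pdy_comm hu.contDiff_dx, pdx_pdy_comm hu.contDiff_two]
  have hleft := ((hasDerivAt_pdy hdxx x y).add (hasDerivAt_pdy hdyy x y)).add
    ((hasDerivAt_pdy (hu.contDiff_dy.differentiable two_ne_zero) x y).const_mul c)
  rw [hcomm] at hleft
  have hright := (hasDerivAt_deriv_deriv hF (u x y)).comp y (hu.hasDerivAt_dy x y)
  exact hleft.unique (hright.congr_of_eventuallyEq (.of_forall fun t => hu.equation x t))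

theorem exists_derivBound (hF : ContDiff ℝ 2 F) (hu : IsSolution F c u) :
    ∃ C, DerivBound u C := by
  obtain ⟨C, hC, hgrad⟩ := exists_gradient_bound c
  obtain ⟨K₁, hK₁, hF₁⟩ := exists_forall_abs_le (contDiff_deriv_of_two hF).continuous (-1) 1
  obtain ⟨K₂, hK₂, hF₂⟩ := exists_forall_abs_le (continuous_deriv_deriv hF) (-1) 1
  set D := C * (1 + K₁)
  set E := C * (D + K₂ * D)
  have hD : 0 < D := by positivity
  have hfirst : ∀ x y, |pdx u x y| ≤ D ∧ |pdy u x y| ≤ D := fun x y =>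
    hgrad u hu.contDiff_two x y 1 K₁ one_pos (fun x y _ _ => abs_le.2 (hu.mem_Icc x y))
      fun x y _ _ => by
        rw [driftLaplacian, hu.equation]
        exact hF₁ _ (hu.mem_Icc x y)
  have hdx : ∀ x y, |pdx (pdx u) x y| ≤ E := fun x y => And.left <|
    hgrad _ hu.contDiff_dx x y D (K₂ * D) hD (fun x y _ _ => (hfirst x y).1) fun x y _ _ => by
      rw [hu.driftLaplacian_dx hF, abs_mul]
      exact mul_le_mul (hF₂ _ (hu.mem_Icc x y)) (hfirst x y).1 (abs_nonneg _) hK₂.le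
  have hdy : ∀ x y, |pdx (pdy u) x y| ≤ E ∧ |pdy (pdy u) x y| ≤ E := fun x y =>
    hgrad _ hu.contDiff_dy x y D (K₂ * D) hD (fun x y _ _ => (hfirst x y).2) fun x y _ _ => by
      rw [hu.driftLaplacian_dy hF, abs_mul]
      exact mul_le_mul (hF₂ _ (hu.mem_Icc x y)) (hfirst x y).2 (abs_nonneg _) hK₂.le
  exact ⟨max D E, lt_max_of_lt_left hD, fun x y => le_max_of_le_left (hfirst x y).1,
    fun x y => le_max_of_le_left (hfirst x y).2, fun x y => le_max_of_le_right (hdx x y),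
    fun x y => le_max_of_le_right (hdy x y).1, fun x y => le_max_of_le_right (hdy x y).2⟩

end IsSolution

/-! ### Decay of the gradient along vertical lines -/

theorem abs_deriv_le_of_deriv_deriv_le {f f' f'' : ℝ → ℝ} {C t : ℝ} (ht : 0 < t)
    (hf : ∀ s, HasDerivAt f (f' s) s) (hf' : ∀ s, HasDerivAt f' (f'' s) s)
    (hC : ∀ s, |f'' s| ≤ C) (x : ℝ) : |f' x| ≤ |f (x + t) - f x| / t + C * t := by
  obtain ⟨ξ, hξ, hslope⟩ := exists_hasDerivAt_eq_slope f f' (lt_add_of_pos_right x ht)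
    (fun s _ => (hf s).continuousAt.continuousWithinAt) (fun s _ => hf s)
  have hξ' : |f' ξ| = |f (x + t) - f x| / t := by
    rw [hslope, abs_div, add_sub_cancel_left, abs_of_pos ht]
  have hlip : |f' x - f' ξ| ≤ C * |x - ξ| :=
    convex_univ.norm_image_sub_le_of_norm_hasDerivWithin_le
      (fun s _ => (hf' s).hasDerivWithinAt) (fun s _ => hC s) (Set.mem_univ ξ) (Set.mem_univ x)
  have hdist : |x - ξ| ≤ t := abs_le.2 ⟨by linarith [hξ.2], by linarith [hξ.1]⟩
  have hC0 : 0 ≤ C := (abs_nonneg _).trans (hC x)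
  have htri : |f' x| ≤ |f' x - f' ξ| + |f' ξ| := by
    simpa using abs_add_le (f' x - f' ξ) (f' ξ)
  linarith [mul_le_mul_of_nonneg_left hdist hC0]

theorem tendsto_deriv_zero_of_deriv_deriv_le {ι : Type*} {l : Filter ι} {f f' f'' : ι → ℝ → ℝ}
    {C : ℝ} {x : ι → ℝ} (hf : ∀ i s, HasDerivAt (f i) (f' i s) s)
    (hf' : ∀ i s, HasDerivAt (f' i) (f'' i s) s) (hC0 : 0 < C) (hC : ∀ i s, |f'' i s| ≤ C)
    (hlim : ∀ t > 0, Tendsto (fun i => f i (x i + t) - f i (x i)) l (𝓝 0)) :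
    Tendsto (fun i => f' i (x i)) l (𝓝 0) := by
  refine Metric.tendsto_nhds.2 fun ε hε => ?_
  set t := ε / (2 * C) with ht
  have ht0 : 0 < t := by positivity
  have hCt : C * t = ε / 2 := by rw [ht]; field_simp
  have hsmall : Tendsto (fun i => |f i (x i + t) - f i (x i)| / t) l (𝓝 0) := by
    simpa using (hlim t ht0).abs.div_const t
  filter_upwards [hsmall.eventually_lt_const (half_pos hε)] with i hi
  rw [Real.dist_eq, sub_zero]
  linarith [abs_deriv_le_of_deriv_deriv_le ht0 (hf i) (hf' i) (hC i) (x i)]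

namespace IsSolution

variable {F : ℝ → ℝ} {c : ℝ} {u : ℝ → ℝ → ℝ} {l : Filter ℝ} {a : ℝ}

theorem tendsto_dx_zero (hF : ContDiff ℝ 2 F) (hu : IsSolution F c u)
    (hlim : ∀ x, Tendsto (u x) l (𝓝 a)) (x : ℝ) : Tendsto (pdx u x) l (𝓝 0) := by
  obtain ⟨C, hC⟩ := hu.exists_derivBound hF
  exact tendsto_deriv_zero_of_deriv_deriv_le (x := fun _ => x)
    (fun y s => hu.hasDerivAt_dx s y) (fun y s => hu.hasDerivAt_dxx s y) hC.pos
    (fun y s => hC.dxx s y) fun t _ => by simpa using (hlim (x + t)).sub (hlim x)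

theorem tendsto_dy_zero (hF : ContDiff ℝ 2 F) (hu : IsSolution F c u)
    (hl : ∀ t : ℝ, Tendsto (fun y => y + t) l l) {x : ℝ} (hlim : Tendsto (u x) l (𝓝 a)) :
    Tendsto (pdy u x) l (𝓝 0) := by
  obtain ⟨C, hC⟩ := hu.exists_derivBound hF
  exact tendsto_deriv_zero_of_deriv_deriv_le (x := fun y => y)
    (fun _ s => hu.hasDerivAt_dy x s) (fun _ s => hu.hasDerivAt_dyy x s) hC.pos
    (fun _ s => hC.dyy x s) fun t _ => by simpa using (hlim.comp (hl t)).sub hlim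

end IsSolution

/-! ### Momentum, Hamiltonian and dissipation -/

/-- The flux density `uₓ uᵧ` of the vertical momentum through a vertical line. -/
noncomputable def momentumDensity (u : ℝ → ℝ → ℝ) (x y : ℝ) : ℝ := pdx u x y * pdy u x y

/-- The flux density of the vertical momentum through a horizontal line; the integrand of the
paper's `ρ`. -/
noncomputable def hamiltonianDensity (F : ℝ → ℝ) (u : ℝ → ℝ → ℝ) (x y : ℝ) : ℝ :=
  (1 / 2) * ((pdx u x y) ^ 2 - (pdy u x y) ^ 2) + F (u x y)

/-- The flux of the vertical momentum through the vertical line with abscissa `x`. -/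
noncomputable def momentum (u : ℝ → ℝ → ℝ) (x : ℝ) : ℝ := ∫ y, momentumDensity u x y

/-- The paper's `ρ`: the flux of the vertical momentum through the horizontal line at height `y`. -/
noncomputable def hamiltonian (F : ℝ → ℝ) (u : ℝ → ℝ → ℝ) (y : ℝ) : ℝ :=
  ∫ x, hamiltonianDensity F u x y

/-- The loss of momentum caused by the drift `c uᵧ` along the vertical line with abscissa `x`,
up to the factor `c`. -/
noncomputable def dissipation (u : ℝ → ℝ → ℝ) (x : ℝ) : ℝ := ∫ y, (pdy u x y) ^ 2

section PlaneIntegrals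

variable {f g : ℝ → ℝ → ℝ}

theorem intervalIntegral_pdx_add_pdy (hf : ContDiff ℝ 1 fun p : ℝ × ℝ => f p.1 p.2)
    (hg : ContDiff ℝ 1 fun p : ℝ × ℝ => g p.1 p.2) (a b y₁ y₂ : ℝ) :
    ∫ x in a..b, ∫ y in y₁..y₂, (pdx f x y + pdy g x y) =
      (∫ x in a..b, g x y₂) - (∫ x in a..b, g x y₁)
        + (∫ y in y₁..y₂, f b y) - ∫ y in y₁..y₂, f a y := by
  have hf' := hf.differentiable one_ne_zero
  have hg' := hg.differentiable one_ne_zero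
  simp only [pdx_eq_fderiv hf', pdy_eq_fderiv hg']
  refine integral2_divergence_prod_of_hasFDerivAt _ _ _ _ a y₁ b y₂ hf.continuous.continuousOn
    hg.continuous.continuousOn (fun p _ => (hf' p).hasFDerivAt) (fun p _ => (hg' p).hasFDerivAt)
    (Continuous.continuousOn ?_ |>.integrableOn_compact (isCompact_uIcc.prod isCompact_uIcc))
  exact ((hf.continuous_fderiv one_ne_zero).clm_apply continuous_const).add
    ((hg.continuous_fderiv one_ne_zero).clm_apply continuous_const)

theorem tendsto_intervalIntegral_zero (hg : Continuous fun p : ℝ × ℝ => g p.1 p.2) {K : ℝ}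
    (hK : ∀ x y, |g x y| ≤ K) {l : Filter ℝ} [l.IsCountablyGenerated]
    (hlim : ∀ x, Tendsto (g x) l (𝓝 0)) (a b : ℝ) :
    Tendsto (fun y => ∫ x in a..b, g x y) l (𝓝 0) := by
  simpa using intervalIntegral.tendsto_integral_filter_of_dominated_convergence
    (F := fun y x => g x y) (f := fun _ => (0 : ℝ)) (a := a) (b := b) (fun _ => K)
    (.of_forall fun y => (hg.uncurry_right y).aestronglyMeasurable)
    (.of_forall fun y => .of_forall fun x _ => hK x y) intervalIntegrable_const
    (.of_forall fun x _ => hlim x)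

theorem abs_intervalIntegral_le_integral_abs {φ : ℝ → ℝ} (hφ : Integrable φ) (a b : ℝ) :
    |∫ y in a..b, φ y| ≤ ∫ y, |φ y| :=
  intervalIntegral.norm_integral_le_integral_norm_uIoc.trans
    (setIntegral_le_integral hφ.norm (.of_forall fun _ => norm_nonneg _))

theorem tendsto_intervalIntegral_integral (hg : Continuous fun p : ℝ × ℝ => g p.1 p.2)
    (hint : ∀ x, Integrable (g x)) {K : ℝ} (hK : ∀ x, ∫ y, |g x y| ≤ K) (a b : ℝ) :
    Tendsto (fun m : ℝ => ∫ x in a..b, ∫ y in -m..m, g x y) atTop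
      (𝓝 (∫ x in a..b, ∫ y, g x y)) := by
  refine intervalIntegral.tendsto_integral_filter_of_dominated_convergence (fun _ => K)
    (.of_forall fun m => ?_) (.of_forall fun m => .of_forall fun x _ => ?_)
    intervalIntegrable_const (.of_forall fun x _ => ?_)
  · exact (intervalIntegral.continuous_parametric_intervalIntegral_of_continuous' hg _ _
      ).aestronglyMeasurable
  · exact (abs_intervalIntegral_le_integral_abs (hint x) _ _).trans (hK x)
  · exact intervalIntegral_tendsto_integral (hint x) tendsto_neg_atTop_atBot tendsto_id

end PlaneIntegrals

theorem dissipation_nonneg (u : ℝ → ℝ → ℝ) (x : ℝ) : 0 ≤ dissipation u x :=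
  integral_nonneg fun _ => sq_nonneg _

namespace IsSolution

variable {F : ℝ → ℝ} {c : ℝ} {u : ℝ → ℝ → ℝ}

theorem contDiff_momentumDensity (hu : IsSolution F c u) :
    ContDiff ℝ 1 fun p : ℝ × ℝ => momentumDensity u p.1 p.2 :=
  (hu.contDiff_dx.of_le one_le_two).mul (hu.contDiff_dy.of_le one_le_two)

theorem contDiff_hamiltonianDensity (hF : ContDiff ℝ 2 F) (hu : IsSolution F c u) :
    ContDiff ℝ 1 fun p : ℝ × ℝ => hamiltonianDensity F u p.1 p.2 :=
  (contDiff_const.mul (((hu.contDiff_dx.pow 2).sub (hu.contDiff_dy.pow 2)).of_le one_le_two)).add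
    ((hF.comp hu.contDiff_two).of_le one_le_two)

theorem continuous_dy_sq (hu : IsSolution F c u) :
    Continuous fun p : ℝ × ℝ => (pdy u p.1 p.2) ^ 2 :=
  hu.contDiff_dy.continuous.pow 2

theorem pdy_hamiltonianDensity (hF : ContDiff ℝ 2 F) (hu : IsSolution F c u) (x y : ℝ) :
    pdy (hamiltonianDensity F u) x y = pdx (momentumDensity u) x y + c * (pdy u x y) ^ 2 := by
  have hdx := hu.contDiff_dx.differentiable two_ne_zero
  have hdy := hu.contDiff_dy.differentiable two_ne_zero
  have hM : pdx (momentumDensity u) x y =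
      pdxx u x y * pdy u x y + pdx u x y * pdx (pdy u) x y :=
    ((hu.hasDerivAt_dxx x y).mul (hasDerivAt_pdx hdy x y)).deriv
  have hH : pdy (hamiltonianDensity F u) x y =
      1 / 2 * (2 * pdx u x y * pdy (pdx u) x y - 2 * pdy u x y * pdyy u x y)
        + deriv F (u x y) * pdy u x y :=
    (((((hasDerivAt_pdy hdx x y).fun_pow 2).sub ((hu.hasDerivAt_dyy x y).fun_pow 2)).const_mul
      (1 / 2)).add (((hF.differentiable two_ne_zero _).hasDerivAt).comp y
        (hu.hasDerivAt_dy x y))).congr_deriv (by simp) |>.deriv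
  rw [hM, hH, ← hu.equation, pdx_pdy_comm hu.contDiff_two]
  ring

theorem exists_abs_hamiltonianDensity_le (hF : ContDiff ℝ 2 F) (hu : IsSolution F c u) :
    ∃ K, ∀ x y, |hamiltonianDensity F u x y| ≤ K := by
  obtain ⟨C, hC⟩ := hu.exists_derivBound hF
  obtain ⟨K, -, hK⟩ := exists_forall_abs_le hF.continuous (-1) 1
  refine ⟨C ^ 2 + K, fun x y => abs_le.2 ?_⟩
  have hdx := sq_le_sq₀ (abs_nonneg _) hC.pos.le |>.2 (hC.dx x y)
  have hdy := sq_le_sq₀ (abs_nonneg _) hC.pos.le |>.2 (hC.dy x y)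
  rw [sq_abs] at hdx hdy
  have hFu := abs_le.1 (hK _ (hu.mem_Icc x y))
  rw [hamiltonianDensity]
  constructor <;> linarith [sq_nonneg (pdx u x y), sq_nonneg (pdy u x y), hFu.1, hFu.2]

theorem tendsto_hamiltonianDensity_zero (hF : ContDiff ℝ 2 F) (hu : IsSolution F c u)
    {l : Filter ℝ} {a : ℝ} (ha : F a = 0) (hl : ∀ t : ℝ, Tendsto (fun y => y + t) l l)
    (hlim : ∀ x, Tendsto (u x) l (𝓝 a)) (x : ℝ) :
    Tendsto (fun y => hamiltonianDensity F u x y) l (𝓝 0) := by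
  have hdx := hu.tendsto_dx_zero hF hlim x
  have hdy := hu.tendsto_dy_zero hF hl (hlim x)
  simpa [hamiltonianDensity, ha] using (((hdx.pow 2).sub (hdy.pow 2)).const_mul (2⁻¹)).add
    ((hF.continuous.tendsto a).comp (hlim x))

theorem box_balance (hF : ContDiff ℝ 2 F) (hu : IsSolution F c u) (a b y₁ y₂ : ℝ) :
    c * ∫ x in a..b, ∫ y in y₁..y₂, (pdy u x y) ^ 2 =
      (∫ x in a..b, hamiltonianDensity F u x y₂) - (∫ x in a..b, hamiltonianDensity F u x y₁)
        - (∫ y in y₁..y₂, momentumDensity u b y) + ∫ y in y₁..y₂, momentumDensity u a y := by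
  have hdiv := intervalIntegral_pdx_add_pdy (f := fun x y => -momentumDensity u x y)
    hu.contDiff_momentumDensity.neg (hu.contDiff_hamiltonianDensity hF) a b y₁ y₂
  simp only [pdx_neg, hu.pdy_hamiltonianDensity hF, neg_add_cancel_left,
    intervalIntegral.integral_const_mul, intervalIntegral.integral_neg] at hdiv
  rw [hdiv]
  ring

end IsSolution

namespace IsTravelingWave

variable {F : ℝ → ℝ} {c : ℝ} {u : ℝ → ℝ → ℝ}

theorem isSolution (hu : IsTravelingWave F c u) : IsSolution F c u := hu.1

theorem tendsto_atTop (hu : IsTravelingWave F c u) (x : ℝ) : Tendsto (u x) atTop (𝓝 1) := hu.2.1 x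

theorem tendsto_atBot (hu : IsTravelingWave F c u) (x : ℝ) : Tendsto (u x) atBot (𝓝 (-1)) :=
  hu.2.2 x

theorem integrable_dy (hu : IsTravelingWave F c u) (x : ℝ) : Integrable (pdy u x) := by
  have hcont : Continuous (pdy u x) := hu.isSolution.contDiff_dy.continuous.uncurry_left x
  refine integrable_of_intervalIntegral_norm_bounded 2 (fun _ => hcont.integrableOn_Ioc)
    tendsto_neg_atTop_atBot tendsto_id (.of_forall fun m => ?_)
  simp_rw [Real.norm_of_nonneg (hu.isSolution.dy_pos x _).le]
  rw [intervalIntegral.integral_eq_sub_of_hasDerivAt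
    (fun y _ => hu.isSolution.hasDerivAt_dy x y) (hcont.intervalIntegrable _ _)]
  linarith [(hu.isSolution.mem_Icc x (id m)).2, (hu.isSolution.mem_Icc x (-m)).1]

theorem integral_comp_mul_dy (hu : IsTravelingWave F c u) {φ : ℝ → ℝ} (hφ : Continuous φ)
    (x : ℝ) : ∫ y, φ (u x y) * pdy u x y = ∫ s in (-1 : ℝ)..1, φ s := by
  have hprim (s : ℝ) : HasDerivAt (fun s => ∫ t in (-1 : ℝ)..s, φ t) (φ s) s :=
    intervalIntegral.integral_hasDerivAt_right (hφ.intervalIntegrable _ _)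
      (hφ.stronglyMeasurableAtFilter _ _) hφ.continuousAt
  have hderiv (y : ℝ) := (hprim (u x y)).comp y (hu.isSolution.hasDerivAt_dy x y)
  obtain ⟨K, -, hK⟩ := exists_forall_abs_le hφ (-1) 1
  have hcont : Continuous fun y => φ (u x y) :=
    hφ.comp (hu.isSolution.contDiff_two.continuous.uncurry_left x)
  have hint : Integrable fun y => φ (u x y) * pdy u x y :=
    (hu.integrable_dy x).bdd_mul hcont.aestronglyMeasurable
      (.of_forall fun y => hK _ (hu.isSolution.mem_Icc x y))
  rw [integral_of_hasDerivAt_of_tendsto hderiv hint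
    ((hprim (-1)).continuousAt.tendsto.comp (hu.tendsto_atBot x))
    ((hprim 1).continuousAt.tendsto.comp (hu.tendsto_atTop x)), intervalIntegral.integral_same,
    sub_zero]

theorem integral_dy (hu : IsTravelingWave F c u) (x : ℝ) : ∫ y, pdy u x y = 2 := by
  simpa [one_add_one_eq_two] using hu.integral_comp_mul_dy (φ := fun _ => 1) continuous_const x

section WeightedIntegrals

variable {g : ℝ → ℝ} {K : ℝ}

theorem integrable_mul_dy (hu : IsTravelingWave F c u) (hg : Continuous g) (hK : ∀ y, |g y| ≤ K)
    (x : ℝ) : Integrable fun y => g y * pdy u x y :=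
  (hu.integrable_dy x).bdd_mul hg.aestronglyMeasurable (.of_forall hK)

theorem integral_abs_mul_dy_le (hu : IsTravelingWave F c u) (hg : Continuous g)
    (hK : ∀ y, |g y| ≤ K) (x : ℝ) : ∫ y, |g y * pdy u x y| ≤ 2 * K := by
  rw [← hu.integral_dy x, mul_comm, ← integral_const_mul]
  refine integral_mono (hu.integrable_mul_dy hg hK x).abs ((hu.integrable_dy x).const_mul K)
    fun y => ?_
  change |g y * pdy u x y| ≤ K * pdy u x y
  rw [abs_mul, abs_of_pos (hu.isSolution.dy_pos x y)]
  exact mul_le_mul_of_nonneg_right (hK y) (hu.isSolution.dy_pos x y).le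

theorem abs_integral_mul_dy_le (hu : IsTravelingWave F c u) (hg : Continuous g)
    (hK : ∀ y, |g y| ≤ K) (x : ℝ) : |∫ y, g y * pdy u x y| ≤ 2 * K :=
  abs_integral_le_integral_abs.trans (hu.integral_abs_mul_dy_le hg hK x)

end WeightedIntegrals

theorem integrable_momentumDensity (hF : ContDiff ℝ 2 F) (hu : IsTravelingWave F c u) (x : ℝ) :
    Integrable (momentumDensity u x) := by
  obtain ⟨C, hC⟩ := hu.isSolution.exists_derivBound hF
  exact hu.integrable_mul_dy (hu.isSolution.contDiff_dx.continuous.uncurry_left x) (hC.dx x) x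

theorem exists_abs_momentum_le (hF : ContDiff ℝ 2 F) (hu : IsTravelingWave F c u) :
    ∃ D, ∀ x, |momentum u x| ≤ D := by
  obtain ⟨C, hC⟩ := hu.isSolution.exists_derivBound hF
  exact ⟨2 * C, fun x => hu.abs_integral_mul_dy_le
    (hu.isSolution.contDiff_dx.continuous.uncurry_left x) (hC.dx x) x⟩

theorem integrable_dy_sq (hF : ContDiff ℝ 2 F) (hu : IsTravelingWave F c u) (x : ℝ) :
    Integrable fun y => (pdy u x y) ^ 2 := by
  obtain ⟨C, hC⟩ := hu.isSolution.exists_derivBound hF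
  simpa only [pow_two] using
    hu.integrable_mul_dy (hu.isSolution.contDiff_dy.continuous.uncurry_left x) (hC.dy x) x

theorem exists_dissipation_le (hF : ContDiff ℝ 2 F) (hu : IsTravelingWave F c u) :
    ∃ D, ∀ x, dissipation u x ≤ D := by
  obtain ⟨C, hC⟩ := hu.isSolution.exists_derivBound hF
  refine ⟨2 * C, fun x => (le_abs_self _).trans ?_⟩
  simpa only [dissipation, pow_two] using
    hu.abs_integral_mul_dy_le (hu.isSolution.contDiff_dy.continuous.uncurry_left x) (hC.dy x) x

theorem momentum_balance (hF : BalancedPotential F) (hu : IsTravelingWave F c u) (a b : ℝ) :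
    c * ∫ x in a..b, dissipation u x = momentum u a - momentum u b := by
  obtain ⟨K, hK⟩ := hu.isSolution.exists_abs_hamiltonianDensity_le hF.contDiff
  obtain ⟨D, hD⟩ := hu.exists_dissipation_le hF.contDiff
  have hcont := (hu.isSolution.contDiff_hamiltonianDensity hF.contDiff).continuous
  have hdiss := tendsto_intervalIntegral_integral hu.isSolution.continuous_dy_sq
    (hu.integrable_dy_sq hF.contDiff) (K := D) (by simpa [dissipation] using hD) a b
  have htop := tendsto_intervalIntegral_zero hcont hK
    (hu.isSolution.tendsto_hamiltonianDensity_zero hF.contDiff hF.apply_one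
      (fun t => tendsto_atTop_add_const_right _ t tendsto_id) hu.tendsto_atTop) a b
  have hbot := (tendsto_intervalIntegral_zero hcont hK
    (hu.isSolution.tendsto_hamiltonianDensity_zero hF.contDiff hF.apply_neg_one
      (fun t => tendsto_atBot_add_const_right _ t tendsto_id) hu.tendsto_atBot) a
        b).comp tendsto_neg_atTop_atBot
  have hside (x : ℝ) : Tendsto (fun m : ℝ => ∫ y in -m..m, momentumDensity u x y) atTop
      (𝓝 (momentum u x)) :=
    intervalIntegral_tendsto_integral (hu.integrable_momentumDensity hF.contDiff x)
      tendsto_neg_atTop_atBot tendsto_id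
  have hbox := hdiss.const_mul c
  simp_rw [hu.isSolution.box_balance hF.contDiff] at hbox
  refine (tendsto_nhds_unique hbox (((htop.sub hbot).sub (hside b)).add (hside a))).trans ?_
  ring

theorem integrable_dissipation (hF : BalancedPotential F) (hc : 0 < c)
    (hu : IsTravelingWave F c u) : Integrable (dissipation u) := by
  obtain ⟨D, hD⟩ := hu.exists_dissipation_le hF.contDiff
  obtain ⟨K, hK⟩ := hu.exists_abs_momentum_le hF.contDiff
  have hmeas : AEStronglyMeasurable (dissipation u) :=
    hu.isSolution.continuous_dy_sq.aestronglyMeasurable.integral_prod_right'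
  have hnorm (x : ℝ) : ‖dissipation u x‖ = dissipation u x :=
    Real.norm_of_nonneg (dissipation_nonneg u x)
  refine integrable_of_intervalIntegral_norm_bounded (2 * K / c) (fun _ => ?_)
    tendsto_neg_atTop_atBot tendsto_id (.of_forall fun m => ?_)
  · exact Measure.integrableOn_of_bounded (by simp) hmeas
      (.of_forall fun x => (hnorm x).trans_le (hD x))
  · simp_rw [hnorm]
    rw [le_div_iff₀' hc, hu.momentum_balance hF]
    linarith [(abs_le.1 (hK (-m))).2, (abs_le.1 (hK (id m))).1]

theorem integrable_dy_sq_prod (hF : BalancedPotential F) (hc : 0 < c)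
    (hu : IsTravelingWave F c u) : Integrable fun p : ℝ × ℝ => (pdy u p.1 p.2) ^ 2 := by
  refine (integrable_prod_iff hu.isSolution.continuous_dy_sq.aestronglyMeasurable).2
    ⟨.of_forall (hu.integrable_dy_sq hF.contDiff), ?_⟩
  exact (hu.integrable_dissipation hF hc).congr (.of_forall fun x => by simp [dissipation])

end IsTravelingWave

/-! ### Decay of the vertical derivative -/

section Decay

open Bornology

theorem tendsto_cobounded_zero_of_integrable {E : Type*} [NormedAddCommGroup E] [ProperSpace E]
    [MeasurableSpace E] [BorelSpace E] {μ : Measure E} [μ.IsAddHaarMeasure] {f : E → ℝ}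
    (hf : Integrable f μ) (huc : UniformContinuous f) : Tendsto f (cobounded E) (𝓝 0) := by
  have hgen : (cobounded E).IsCountablyGenerated := comap_norm_atTop (E := E) ▸ inferInstance
  have hball (r : ℝ) : Tendsto (fun p => ∫ q in ball p r, ‖f q‖ ∂μ) (cobounded E) (𝓝 0) := by
    simp_rw [← integral_indicator measurableSet_ball]
    rw [← integral_zero E ℝ (μ := μ)]
    refine tendsto_integral_filter_of_dominated_convergence (fun q => ‖f q‖)
      (.of_forall fun p => hf.norm.aestronglyMeasurable.indicator measurableSet_ball)
      (.of_forall fun p => .of_forall fun q => ?_) hf.norm (.of_forall fun q => ?_)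
    · simpa using norm_indicator_le_norm_self (fun q => ‖f q‖) q
    · refine tendsto_const_nhds.congr' ?_
      filter_upwards [(tendsto_dist_right_cobounded_atTop q).eventually_ge_atTop r] with p hp
      rw [Set.indicator_of_notMem (by simpa [dist_comm q p] using hp)]
  refine Metric.tendsto_nhds.2 fun ε hε => ?_
  obtain ⟨r, hr, hclose⟩ := Metric.uniformContinuous_iff.1 huc (ε / 2) (half_pos hε)
  have hvol (p : E) : μ.real (ball p r) = μ.real (ball 0 r) := by
    simp only [Measure.real, Measure.addHaar_ball_center]
  have hpos : 0 < μ.real (ball (0 : E) r) :=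
    ENNReal.toReal_pos (measure_ball_pos μ 0 hr).ne' measure_ball_lt_top.ne
  filter_upwards [(hball r).eventually_lt_const (mul_pos (half_pos hε) hpos)] with p hp
  rw [dist_zero_right]
  by_contra! hle
  have hlow : ε / 2 * μ.real (ball p r) ≤ ∫ q in ball p r, ‖f q‖ ∂μ :=
    setIntegral_ge_of_const_le_real measurableSet_ball measure_ball_lt_top.ne
      (fun q hq => by
        have hdist : ‖f p - f q‖ < ε / 2 := dist_eq_norm (f p) (f q) ▸ hclose (mem_ball'.1 hq)
        linarith [norm_sub_norm_le (f p) (f q)])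
      hf.norm.integrableOn
  exact (hlow.trans_lt hp).ne (by rw [hvol])

theorem uniformContinuous_of_abs_pdx_le_of_abs_pdy_le {w : ℝ → ℝ → ℝ} {C : ℝ}
    (hw : Differentiable ℝ fun p : ℝ × ℝ => w p.1 p.2) (hx : ∀ x y, |pdx w x y| ≤ C)
    (hy : ∀ x y, |pdy w x y| ≤ C) : UniformContinuous fun p : ℝ × ℝ => w p.1 p.2 := by
  refine (LipschitzWith.of_dist_le' (K := C + C) fun p q => ?_).uniformContinuous
  have hC : 0 ≤ C := (abs_nonneg _).trans (hx 0 0)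
  have h₁ : |w p.1 p.2 - w q.1 p.2| ≤ C * |p.1 - q.1| :=
    convex_univ.norm_image_sub_le_of_norm_hasDerivWithin_le
      (fun s _ => (hasDerivAt_pdx hw s p.2).hasDerivWithinAt) (fun s _ => hx s p.2)
      (Set.mem_univ q.1) (Set.mem_univ p.1)
  have h₂ : |w q.1 p.2 - w q.1 q.2| ≤ C * |p.2 - q.2| :=
    convex_univ.norm_image_sub_le_of_norm_hasDerivWithin_le
      (fun s _ => (hasDerivAt_pdy hw q.1 s).hasDerivWithinAt) (fun s _ => hy q.1 s)
      (Set.mem_univ q.2) (Set.mem_univ p.2)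
  calc dist (w p.1 p.2) (w q.1 q.2)
      ≤ |w p.1 p.2 - w q.1 p.2| + |w q.1 p.2 - w q.1 q.2| := dist_triangle _ (w q.1 p.2) _
    _ ≤ C * dist p q + C * dist p q :=
        add_le_add (h₁.trans (mul_le_mul_of_nonneg_left (le_max_left _ _) hC))
          (h₂.trans (mul_le_mul_of_nonneg_left (le_max_right _ _) hC))
    _ = (C + C) * dist p q := by ring

theorem eventually_cobounded_forall_closedBall {E : Type*} [SeminormedAddCommGroup E]
    {P : E → Prop} (h : ∀ᶠ p in cobounded E, P p) (r : ℝ) :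
    ∀ᶠ p in cobounded E, ∀ q ∈ closedBall p r, P q := by
  obtain ⟨R, -, hR⟩ := hasBasis_cobounded_norm.eventually_iff.1 h
  refine hasBasis_cobounded_norm.eventually_iff.2 ⟨R + r, trivial, fun p hp q hq => hR ?_⟩
  have hsub : ‖p‖ - ‖q‖ ≤ r := (norm_sub_norm_le p q).trans (by rwa [← mem_closedBall_iff_norm'])
  rw [Set.mem_ofPred_eq] at hp ⊢
  linarith

theorem eventually_atTop_forall_abs_le {g : ℝ → ℝ → ℝ}
    (hg : Tendsto (fun p : ℝ × ℝ => g p.1 p.2) (cobounded (ℝ × ℝ)) (𝓝 0)) {ε : ℝ} (hε : 0 < ε) :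
    ∀ᶠ x in atTop, ∀ y, |g x y| ≤ ε := by
  have hsmall : ∀ᶠ p : ℝ × ℝ in cobounded (ℝ × ℝ), |g p.1 p.2| ≤ ε := by
    simpa using hg.abs.eventually_le_const (by simpa using hε)
  obtain ⟨R, -, hR⟩ := hasBasis_cobounded_norm.eventually_iff.1 hsmall
  filter_upwards [eventually_ge_atTop R] with x hx y
  exact hR (x := (x, y)) ((hx.trans (le_abs_self x)).trans (le_max_left _ _))

namespace IsTravelingWave

variable {F : ℝ → ℝ} {c : ℝ} {u : ℝ → ℝ → ℝ}

theorem tendsto_dy_cobounded (hF : BalancedPotential F) (hc : 0 < c)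
    (hu : IsTravelingWave F c u) :
    Tendsto (fun p : ℝ × ℝ => pdy u p.1 p.2) (cobounded (ℝ × ℝ)) (𝓝 0) := by
  obtain ⟨C, hC⟩ := hu.isSolution.exists_derivBound hF.contDiff
  have hC₀ := hC.pos.le
  have hdiff := hu.isSolution.contDiff_dy.differentiable two_ne_zero
  have hbound {a b : ℝ} (ha : |a| ≤ C) (hb : |b| ≤ C) : |2 * a * b| ≤ 2 * C * C := by
    rw [abs_mul, abs_mul, abs_two]
    gcongr
  have huc : UniformContinuous fun p : ℝ × ℝ => (pdy u p.1 p.2) ^ 2 := by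
    refine uniformContinuous_of_abs_pdx_le_of_abs_pdy_le (w := fun x y => (pdy u x y) ^ 2)
      (C := 2 * C * C) (hdiff.pow 2) (fun x y => ?_) fun x y => ?_
    · have h := ((hasDerivAt_pdx hdiff x y).fun_pow 2).deriv
      rw [pdx, h]
      simpa using hbound (hC.dy x y) (hC.dxy x y)
    · have h := ((hu.isSolution.hasDerivAt_dyy x y).fun_pow 2).deriv
      rw [pdy, h]
      simpa using hbound (hC.dy x y) (hC.dyy x y)
  have hsq := (tendsto_cobounded_zero_of_integrable (hu.integrable_dy_sq_prod hF hc) huc).sqrt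
  simpa [sqrt_sq, (hu.isSolution.dy_pos _ _).le] using hsq

theorem tendsto_dyy_cobounded (hF : BalancedPotential F) (hc : 0 < c)
    (hu : IsTravelingWave F c u) :
    Tendsto (fun p : ℝ × ℝ => pdyy u p.1 p.2) (cobounded (ℝ × ℝ)) (𝓝 0) := by
  obtain ⟨C, hC, hgrad⟩ := exists_gradient_bound c
  obtain ⟨K, hK, hF₂⟩ := exists_forall_abs_le (continuous_deriv_deriv hF.contDiff) (-1) 1
  refine Metric.tendsto_nhds.2 fun ε hε => ?_
  set η := ε / (2 * (C * (1 + K))) with hη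
  have hη0 : 0 < η := by positivity
  have hsmall : ∀ᶠ p : ℝ × ℝ in cobounded (ℝ × ℝ), |pdy u p.1 p.2| ≤ η := by
    simpa using (hu.tendsto_dy_cobounded hF hc).abs.eventually_le_const (by simpa using hη0)
  filter_upwards [eventually_cobounded_forall_closedBall hsmall 1] with p hp
  have hnear : ∀ x y, |x - p.1| ≤ 1 → |y - p.2| ≤ 1 → |pdy u x y| ≤ η := fun x y hx hy =>
    hp (x, y) (max_le hx hy)
  have hdyy := (hgrad (pdy u) hu.isSolution.contDiff_dy p.1 p.2 η (K * η) hη0 hnear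
    fun x y hx hy => by
      rw [hu.isSolution.driftLaplacian_dy hF.contDiff, abs_mul]
      exact mul_le_mul (hF₂ _ (hu.isSolution.mem_Icc x y)) (hnear x y hx hy) (abs_nonneg _)
        hK.le).2
  have hhalf : C * (η + K * η) = ε / 2 := by rw [hη]; field_simp
  rw [dist_zero_right]
  exact (hdyy.trans_eq hhalf).trans_lt (half_lt_self hε)

theorem eventually_abs_dyy_add_mul_dy_le (hF : BalancedPotential F) (hc : 0 < c)
    (hu : IsTravelingWave F c u) {ε : ℝ} (hε : 0 < ε) :
    ∀ᶠ x in atTop, ∀ y, |pdyy u x y + c * pdy u x y| ≤ ε := by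
  refine eventually_atTop_forall_abs_le (g := fun x y => pdyy u x y + c * pdy u x y) ?_ hε
  simpa using (hu.tendsto_dyy_cobounded hF hc).add ((hu.tendsto_dy_cobounded hF hc).const_mul c)

end IsTravelingWave

end Decay

/-! ### Asymptotic conservation of the slice energy -/

/-- The mechanical energy `F(u) - uₓ² / 2` of `x ↦ u(x, y)`, which would be constant in `x` if
this function were a one-dimensional standing wave. -/
noncomputable def sliceEnergy (F : ℝ → ℝ) (u : ℝ → ℝ → ℝ) (x y : ℝ) : ℝ :=
  F (u x y) - 1 / 2 * (pdx u x y) ^ 2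

theorem exists_abs_deriv_mul_le {v v' : ℝ → ℝ} {B a L : ℝ} (hL : 0 < L)
    (hv : ∀ t, HasDerivAt v (v' t) t) (hB : ∀ t, |v t| ≤ B) :
    ∃ t ∈ Set.Icc a (a + L), |v' t| * L ≤ 2 * B := by
  obtain ⟨t, ht, hslope⟩ := exists_hasDerivAt_eq_slope v v' (lt_add_of_pos_right a hL)
    (fun s _ => (hv s).continuousAt.continuousWithinAt) fun s _ => hv s
  refine ⟨t, Set.Ioo_subset_Icc_self ht, ?_⟩
  rw [add_sub_cancel_left, eq_div_iff hL.ne'] at hslope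
  calc |v' t| * L = |v (a + L) - v a| := by rw [← hslope, abs_mul, abs_of_pos hL]
    _ ≤ |v (a + L)| + |v a| := abs_sub _ _
    _ ≤ 2 * B := by linarith [hB a, hB (a + L)]

/-- The weight `exp (k v)` turns `v'' + k v'²` into the derivative of a bounded function. -/
theorem mul_length_le_of_le_deriv_deriv_add_sq {v v' v'' : ℝ → ℝ} {k m C a L : ℝ} (hk : 0 ≤ k)
    (hL : 0 < L) (hv : ∀ t, HasDerivAt v (v' t) t) (hv' : ∀ t, HasDerivAt v' (v'' t) t)
    (h₁ : ∀ t, |v t| ≤ 1) (hC : ∀ t, |v' t| ≤ C) (hm : 0 ≤ m)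
    (hle : ∀ t ∈ Set.Icc a (a + L), m ≤ v'' t + k * (v' t) ^ 2) :
    m * exp (-k) * L ≤ 2 * (C * exp k) := by
  have hderiv (t : ℝ) : HasDerivAt (fun t => v' t * exp (k * v t))
      ((v'' t + k * (v' t) ^ 2) * exp (k * v t)) t :=
    ((hv' t).mul ((hv t).const_mul k).exp).congr_deriv (by ring)
  have hexp (t : ℝ) : exp (-k) ≤ exp (k * v t) ∧ exp (k * v t) ≤ exp k := by
    have h := abs_le.1 (h₁ t)
    constructor <;> refine exp_le_exp.2 ?_ <;> nlinarith
  obtain ⟨t, ht, hbound⟩ := exists_abs_deriv_mul_le (a := a) hL hderiv (B := C * exp k)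
    fun t => by
      rw [abs_mul, abs_exp]
      exact mul_le_mul (hC t) (hexp t).2 (exp_pos _).le ((abs_nonneg _).trans (hC t))
  refine le_trans (mul_le_mul_of_nonneg_right ?_ hL.le) hbound
  exact (mul_le_mul (hle t ht) (hexp t).1 (exp_pos _).le (hm.trans (hle t ht))).trans
    (le_abs_self _)

namespace BalancedPotential

variable {F : ℝ → ℝ}

theorem exists_forall_le_deriv (hF : BalancedPotential F) {a b : ℝ} (ha : 0 < a) (hb : b < F 0) :
    ∃ m > 0, ∀ s ∈ Set.Icc (-1 : ℝ) 0, F s ∈ Set.Icc a b → m ≤ deriv F s := by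
  have hcompact : IsCompact (Set.Icc (-1 : ℝ) 0 ∩ F ⁻¹' Set.Icc a b) :=
    isCompact_Icc.inter_right (isClosed_Icc.preimage hF.continuous)
  obtain ⟨m, hm, h⟩ := hcompact.exists_forall_le' (f := deriv F) (a := 0)
    (contDiff_deriv_of_two hF.contDiff).continuous.continuousOn fun s hs => by
      refine hF.deriv_pos s ⟨hs.1.1.lt_of_ne ?_, hs.1.2.lt_of_ne ?_⟩
      · rintro rfl
        exact (ha.trans_le (hF.apply_neg_one ▸ hs.2.1)).false
      · rintro rfl
        exact (hs.2.2.trans_lt hb).false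
  exact ⟨m, hm, fun s hs hs' => h s ⟨hs, hs'⟩⟩

/-- A point of mechanical energy close to `ε / 2` lying below a point of potential at least
`7 ε / 8` is either fast or on the rising branch of the potential. -/
theorem exists_le_deriv_add_mul_sq (hF : BalancedPotential F) {ε : ℝ} (hε : 0 < ε)
    (hεF : ε < F 0) :
    ∃ m > 0, ∃ k > 0, ∀ s ∈ Set.Icc (-1 : ℝ) 1, ∀ r ∈ Set.Icc (-1 : ℝ) 1, s ≤ r → ∀ p : ℝ,
      |F s - 1 / 2 * p ^ 2 - ε / 2| ≤ ε / 8 → 7 / 8 * ε ≤ F r → m ≤ deriv F s + k * p ^ 2 := by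
  obtain ⟨K, hK, hF'⟩ :=
    exists_forall_abs_le (contDiff_deriv_of_two hF.contDiff).continuous (-1) 1
  obtain ⟨m, hm, hrise⟩ := hF.exists_forall_le_deriv (a := 3 / 8 * ε) (b := 6 / 8 * ε)
    (by positivity) (by linarith)
  set k := 4 * (K + 1) / ε with hk
  have hk₀ : 0 < k := by positivity
  refine ⟨min 1 m, by positivity, k, hk₀, fun s hs r hr hsr p henergy hFr => ?_⟩
  have henergy := abs_le.1 henergy
  have hkp : 0 ≤ k * p ^ 2 := by positivity
  have hfast (hp : ε / 4 ≤ p ^ 2) : min 1 m ≤ deriv F s + k * p ^ 2 := by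
    have hkε : k * (ε / 4) = K + 1 := by rw [hk]; field_simp
    linarith [mul_le_mul_of_nonneg_left hp hk₀.le, (abs_le.1 (hF' s hs)).1, min_le_left 1 m]
  rcases le_total 0 s with hs₀ | hs₀
  · have hFs : F r ≤ F s := hF.strictAntiOn.antitoneOn ⟨hs₀, hs.2⟩ ⟨hs₀.trans hsr, hr.2⟩ hsr
    exact hfast (by linarith)
  · rcases le_total (6 / 8 * ε) (F s) with hFs | hFs
    · exact hfast (by linarith)
    · have := hrise s ⟨hs.1, hs₀⟩ ⟨by linarith [sq_nonneg p], hFs⟩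
      linarith [min_le_right 1 m]

end BalancedPotential

namespace IsSolution

variable {F : ℝ → ℝ} {c : ℝ} {u : ℝ → ℝ → ℝ}

theorem hasDerivAt_sliceEnergy (hF : Differentiable ℝ F) (hu : IsSolution F c u) (x y : ℝ) :
    HasDerivAt (fun t => sliceEnergy F u t y) (pdx u x y * (pdyy u x y + c * pdy u x y)) x := by
  have hpot := (hF (u x y)).hasDerivAt.comp x (hu.hasDerivAt_dx x y)
  have hkin := ((hu.hasDerivAt_dxx x y).fun_pow 2).const_mul (1 / 2)
  refine (hpot.sub hkin).congr_deriv ?_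
  rw [← hu.equation]
  simp only [Nat.cast_ofNat, Nat.add_one_sub_one, pow_one]
  ring

end IsSolution

namespace IsTravelingWave

variable {F : ℝ → ℝ} {c : ℝ} {u : ℝ → ℝ → ℝ}

theorem tendsto_sliceEnergy_atBot (hF : BalancedPotential F) (hu : IsTravelingWave F c u)
    (x : ℝ) : Tendsto (sliceEnergy F u x) atBot (𝓝 0) := by
  have hdx := hu.isSolution.tendsto_dx_zero hF.contDiff hu.tendsto_atBot x
  have hpot := (hF.continuous.tendsto (-1)).comp (hu.tendsto_atBot x)
  have hsub := hpot.sub ((hdx.pow 2).const_mul (1 / 2))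
  rwa [hF.apply_neg_one, zero_pow two_ne_zero, mul_zero, sub_zero] at hsub

theorem eventually_abs_sliceEnergy_sub_le (hF : BalancedPotential F) (hc : 0 < c)
    (hu : IsTravelingWave F c u) {ε L : ℝ} (hε : 0 < ε) (hL : 0 < L) :
    ∀ᶠ x in atTop, ∀ y, ∀ t ∈ Set.Icc x (x + L),
      |sliceEnergy F u t y - sliceEnergy F u x y| ≤ ε := by
  obtain ⟨C, hC⟩ := hu.isSolution.exists_derivBound hF.contDiff
  have hC₀ := hC.pos
  obtain ⟨X, hX⟩ := eventually_atTop.1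
    (hu.eventually_abs_dyy_add_mul_dy_le hF hc (ε := ε / (C * L)) (by positivity))
  filter_upwards [eventually_ge_atTop X] with x hx y t ht
  have hslope (s : ℝ) (hs : s ∈ Set.Ici X) :
      ‖pdx u s y * (pdyy u s y + c * pdy u s y)‖ ≤ C * (ε / (C * L)) := by
    rw [norm_mul]
    exact mul_le_mul (hC.dx s y) (hX s hs y) (norm_nonneg _) hC₀.le
  calc |sliceEnergy F u t y - sliceEnergy F u x y|
      ≤ C * (ε / (C * L)) * ‖t - x‖ :=
        (convex_Ici X).norm_image_sub_le_of_norm_hasDerivWithin_le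
          (fun s _ =>
            (hu.isSolution.hasDerivAt_sliceEnergy hF.differentiable s y).hasDerivWithinAt)
          hslope (Set.mem_Ici.2 hx) (Set.mem_Ici.2 (hx.trans ht.1))
    _ ≤ C * (ε / (C * L)) * L := by
        gcongr
        rw [Real.norm_of_nonneg (sub_nonneg.2 ht.1)]
        linarith [ht.2]
    _ = ε := by field_simp

/-- A negative energy would force a slope `≥ √ε` on an interval of length `3 / √ε`. -/
theorem eventually_neg_le_sliceEnergy (hF : BalancedPotential F) (hc : 0 < c)
    (hu : IsTravelingWave F c u) {ε : ℝ} (hε : 0 < ε) :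
    ∀ᶠ x in atTop, ∀ y, -ε ≤ sliceEnergy F u x y := by
  have hL : 0 < 3 / √ε := by positivity
  filter_upwards [hu.eventually_abs_sliceEnergy_sub_le hF hc (half_pos hε) hL] with x hx y
  by_contra! hneg
  obtain ⟨t, ht, hslope⟩ := exists_abs_deriv_mul_le (a := x) (B := 1) hL
    (fun t => hu.isSolution.hasDerivAt_dx t y) fun t => abs_le.2 (hu.isSolution.mem_Icc t y)
  have hfast : √ε ≤ |pdx u t y| := by
    have henergy := (abs_le.1 (hx y t ht)).2
    have hpot := hF.nonneg (hu.isSolution.mem_Icc t y)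
    rw [← sqrt_sq_eq_abs]
    refine sqrt_le_sqrt ?_
    simp only [sliceEnergy] at henergy hneg
    linarith
  have hthree : √ε * (3 / √ε) = 3 := mul_div_cancel₀ _ (by positivity)
  linarith [mul_le_mul_of_nonneg_right hfast hL.le]

/-- If the energy at `(x, y)` exceeded `ε`, then at some `(x, z)` with `z ≤ y` it would be
`ε / 2`, and both values would persist on a long interval to the right of `x`. -/
theorem eventually_sliceEnergy_le (hF : BalancedPotential F) (hc : 0 < c)
    (hu : IsTravelingWave F c u) {ε : ℝ} (hε : 0 < ε) (hεF : ε < F 0) :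
    ∀ᶠ x in atTop, ∀ y, sliceEnergy F u x y ≤ ε := by
  have hsol := hu.isSolution
  obtain ⟨C, hC⟩ := hsol.exists_derivBound hF.contDiff
  obtain ⟨m, hm, k, hk, hmk⟩ := hF.exists_le_deriv_add_mul_sq hε hεF
  have hC₀ := hC.pos
  set L := (2 * (C * exp k) + 1) / (m / 2 * exp (-k))
  have hL₀ : 0 < L := by positivity
  obtain ⟨X, hX⟩ := eventually_atTop.1 (hu.eventually_abs_dyy_add_mul_dy_le hF hc (half_pos hm))
  filter_upwards [hu.eventually_abs_sliceEnergy_sub_le hF hc (ε := ε / 8) (by positivity) hL₀,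
    eventually_ge_atTop X] with x hx hXx y
  by_contra! hlarge
  have hcont : Continuous (sliceEnergy F u x) :=
    (hF.continuous.comp (hsol.contDiff_three.continuous.uncurry_left x)).sub
      (((hsol.contDiff_dx.continuous.uncurry_left x).pow 2).const_mul _)
  obtain ⟨y₀, hy₀, hy₀y⟩ := (((hu.tendsto_sliceEnergy_atBot hF x).eventually_lt_const
    (half_pos hε)).and (eventually_le_atBot y)).exists
  obtain ⟨z, hz, hhalf⟩ := intermediate_value_Icc hy₀y hcont.continuousOn
    (show ε / 2 ∈ _ from ⟨hy₀.le, by linarith⟩)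
  have hconvex (t : ℝ) (ht : t ∈ Set.Icc x (x + L)) :
      m / 2 ≤ pdxx u t z + k * (pdx u t z) ^ 2 := by
    have hhigh : 7 / 8 * ε ≤ F (u t y) := by
      have henergy := (abs_le.1 (hx y t ht)).1
      rw [sliceEnergy] at henergy
      linarith [sq_nonneg (pdx u t y)]
    have hpot := hmk _ (hsol.mem_Icc t z) _ (hsol.mem_Icc t y)
      ((hsol.strictMono t).monotone hz.2) (pdx u t z) (hhalf ▸ hx z t ht) hhigh
    linarith [hsol.equation t z, (abs_le.1 (hX t (hXx.trans ht.1) z)).2]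
  have hlength := mul_length_le_of_le_deriv_deriv_add_sq hk.le hL₀
    (fun t => hsol.hasDerivAt_dx t z) (fun t => hsol.hasDerivAt_dxx t z)
    (fun t => abs_le.2 (hsol.mem_Icc t z)) (fun t => hC.dx t z) (half_pos hm).le hconvex
  have hLmul : m / 2 * exp (-k) * L = 2 * (C * exp k) + 1 := mul_div_cancel₀ _ (by positivity)
  linarith

theorem eventually_abs_sliceEnergy_le (hF : BalancedPotential F) (hc : 0 < c)
    (hu : IsTravelingWave F c u) {ε : ℝ} (hε : 0 < ε) :
    ∀ᶠ x in atTop, ∀ y, |sliceEnergy F u x y| ≤ ε := by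
  have hF₀ : 0 < F 0 := hF.pos_of_mem_Ioc ⟨by norm_num, le_rfl⟩
  filter_upwards [hu.eventually_neg_le_sliceEnergy hF hc hε, hu.eventually_sliceEnergy_le hF hc
    (ε := min ε (F 0 / 2)) (by positivity) (min_lt_of_right_lt (half_lt_self hF₀))]
    with x hlow hhigh y
  exact abs_le.2 ⟨hlow y, (hhigh y).trans (min_le_left _ _)⟩

end IsTravelingWave

/-! ### Limits of the momentum -/

/-- The slope of the one-dimensional standing wave where it takes the value `s`. -/
noncomputable def standingSlope (F : ℝ → ℝ) (s : ℝ) : ℝ := √(2 * F s)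

/-- The energy `𝔢` of the one-dimensional standing wave. -/
noncomputable def standingEnergy (F : ℝ → ℝ) : ℝ := ∫ s in (-1 : ℝ)..1, standingSlope F s

theorem continuous_standingSlope {F : ℝ → ℝ} (hF : Continuous F) :
    Continuous (standingSlope F) :=
  (hF.const_mul 2).sqrt

theorem standingSlope_nonneg (F : ℝ → ℝ) (s : ℝ) : 0 ≤ standingSlope F s :=
  sqrt_nonneg _

theorem BalancedPotential.standingEnergy_pos {F : ℝ → ℝ} (hF : BalancedPotential F) :
    0 < standingEnergy F :=
  intervalIntegral.integral_pos (by norm_num) (continuous_standingSlope hF.continuous).continuousOn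
    (fun s _ => standingSlope_nonneg F s) ⟨0, by norm_num,
      sqrt_pos.2 (mul_pos two_pos (hF.pos_of_mem_Ioc ⟨by norm_num, le_rfl⟩))⟩

theorem abs_abs_sub_le_of_abs_sq_sub_sq_le {p q θ : ℝ} (hq : 0 ≤ q) (hθ : 0 ≤ θ)
    (h : |q ^ 2 - p ^ 2| ≤ θ ^ 2) : |(|p| - q)| ≤ θ := by
  rw [← sq_abs p] at h
  obtain ⟨hlow, hhigh⟩ := abs_le.1 h
  rw [abs_le]
  constructor <;> nlinarith [abs_nonneg p]

theorem forall_pos_or_forall_neg_of_isPreconnected {α : Type*} [TopologicalSpace α] {S : Set α}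
    (hS : IsPreconnected S) {f : α → ℝ} (hf : ContinuousOn f S) (hne : ∀ y ∈ S, f y ≠ 0) :
    (∀ y ∈ S, 0 < f y) ∨ ∀ y ∈ S, f y < 0 := by
  by_contra! h
  obtain ⟨⟨a, ha, hfa⟩, b, hb, hfb⟩ := h
  obtain ⟨z, hz, hfz⟩ := hS.intermediate_value ha hb hf ⟨hfa, hfb⟩
  exact hne z hz hfz

theorem forall_abs_sub_le_or_forall_abs_add_le {α : Type*} [TopologicalSpace α] {p q : α → ℝ}
    {θ : ℝ} (hp : Continuous p) (hpq : ∀ y, |(|p y| - q y)| ≤ θ)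
    (hconn : IsPreconnected {y | θ < q y}) :
    (∀ y, |p y - q y| ≤ 3 * θ) ∨ ∀ y, |p y + q y| ≤ 3 * θ := by
  have hne (y : α) (hy : θ < q y) : p y ≠ 0 := by
    intro hzero
    have := abs_le.1 (hpq y)
    rw [hzero, abs_zero] at this
    linarith [this.1]
  have hsmall (y : α) (hy : q y ≤ θ) : |p y| + |q y| ≤ 3 * θ := by
    have := abs_le.1 (hpq y)
    have hq : |q y| ≤ θ := abs_le.2 ⟨by linarith [this.2, abs_nonneg (p y)], hy⟩
    linarith [this.2]
  refine (forall_pos_or_forall_neg_of_isPreconnected hconn hp.continuousOn hne).imp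
    (fun hsign y => ?_) fun hsign y => ?_
  · rcases lt_or_ge θ (q y) with hy | hy
    · have := hpq y
      rw [abs_of_pos (hsign y hy)] at this
      linarith [abs_nonneg (p y - q y)]
    · exact (abs_sub _ _).trans (hsmall y hy)
  · rcases lt_or_ge θ (q y) with hy | hy
    · have := hpq y
      rw [abs_of_neg (hsign y hy), ← neg_add', abs_neg] at this
      linarith [abs_nonneg (p y + q y)]
    · exact (abs_add_le _ _).trans (hsmall y hy)

theorem tendsto_of_strictAnti_of_tendsto_abs {f : ℝ → ℝ} {e D : ℝ} (hf : StrictAnti f)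
    (hD : ∀ x, |f x| ≤ D) (htop : Tendsto (fun x => |f x|) atTop (𝓝 e))
    (hbot : Tendsto (fun x => |f x|) atBot (𝓝 e)) :
    Tendsto f atBot (𝓝 e) ∧ Tendsto f atTop (𝓝 (-e)) := by
  have hbelow : BddBelow (Set.range f) :=
    ⟨-D, Set.forall_mem_range.2 fun x => (abs_le.1 (hD x)).1⟩
  have habove : BddAbove (Set.range f) :=
    ⟨D, Set.forall_mem_range.2 fun x => (abs_le.1 (hD x)).2⟩
  have hinf := tendsto_atTop_ciInf hf.antitone hbelow
  have hsup := tendsto_atBot_ciSup hf.antitone habove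
  have hlt : ⨅ x, f x < ⨆ x, f x :=
    ((ciInf_le hbelow 1).trans_lt (hf one_pos)).trans_le (le_ciSup habove 0)
  have hinf_abs : |⨅ x, f x| = e := tendsto_nhds_unique hinf.abs htop
  have hsup_abs : |⨆ x, f x| = e := tendsto_nhds_unique hsup.abs hbot
  have : 0 ≤ e := hsup_abs ▸ abs_nonneg _
  have hinf_eq : ⨅ x, f x = -e := by
    refine (eq_or_eq_neg_of_abs_eq hinf_abs).resolve_left fun h => ?_
    linarith [le_abs_self (⨆ x, f x)]
  have hsup_eq : ⨆ x, f x = e := by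
    refine (eq_or_eq_neg_of_abs_eq hsup_abs).resolve_right fun h => ?_
    linarith
  exact ⟨hsup_eq ▸ hsup, hinf_eq ▸ hinf⟩

section Reflection

variable {F : ℝ → ℝ} {c : ℝ} {u : ℝ → ℝ → ℝ}

theorem pdx_reflect (w : ℝ → ℝ → ℝ) (x y : ℝ) :
    pdx (fun x y => w (-x) y) x y = -pdx w (-x) y :=
  deriv_comp_neg (fun t => w t y) x

theorem pdxx_reflect (w : ℝ → ℝ → ℝ) (x y : ℝ) :
    pdxx (fun x y => w (-x) y) x y = pdxx w (-x) y := by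
  simp only [pdxx, pdx_reflect]
  rw [deriv.fun_neg, deriv_comp_neg (fun t => pdx w t y), neg_neg]

theorem momentum_reflect (w : ℝ → ℝ → ℝ) (x : ℝ) :
    momentum (fun x y => w (-x) y) x = -momentum w (-x) := by
  rw [momentum, momentum, ← integral_neg]
  simp only [momentumDensity, pdx_reflect, neg_mul]
  rfl

theorem hamiltonianDensity_reflect (F : ℝ → ℝ) (w : ℝ → ℝ → ℝ) (x y : ℝ) :
    hamiltonianDensity F (fun x y => w (-x) y) x y = hamiltonianDensity F w (-x) y := by
  simp only [hamiltonianDensity, pdx_reflect, neg_sq]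
  rfl

theorem IsTravelingWave.reflect (hu : IsTravelingWave F c u) :
    IsTravelingWave F c fun x y => u (-x) y := by
  refine ⟨⟨hu.isSolution.contDiff_three.comp (contDiff_fst.neg.prodMk contDiff_snd),
    fun x y => ?_, fun x y => hu.1.2.2.1 (-x) y, fun x y => hu.isSolution.dy_pos (-x) y⟩,
    fun x => hu.tendsto_atTop (-x), fun x => hu.tendsto_atBot (-x)⟩
  rw [pdxx_reflect]
  exact hu.isSolution.equation (-x) y

end Reflection

namespace IsTravelingWave

variable {F : ℝ → ℝ} {c : ℝ} {u : ℝ → ℝ → ℝ}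

theorem eventually_dx_near_standingSlope (hF : BalancedPotential F) (hc : 0 < c)
    (hu : IsTravelingWave F c u) {η : ℝ} (hη : 0 < η) :
    ∀ᶠ x in atTop, (∀ y, |pdx u x y - standingSlope F (u x y)| ≤ η) ∨
      ∀ y, |pdx u x y + standingSlope F (u x y)| ≤ η := by
  obtain ⟨θ, hθ, rfl⟩ : ∃ θ > 0, 3 * θ = η := ⟨η / 3, by positivity, by ring⟩
  filter_upwards [hu.eventually_abs_sliceEnergy_le hF hc (ε := θ ^ 2 / 2) (by positivity)]
    with x hx
  refine forall_abs_sub_le_or_forall_abs_add_le (q := fun y => standingSlope F (u x y))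
    (hu.isSolution.contDiff_dx.continuous.uncurry_left x) (fun y => ?_) ?_
  · have henergy : |2 * F (u x y) - (pdx u x y) ^ 2| = 2 * |sliceEnergy F u x y| := by
      rw [sliceEnergy, ← abs_two, ← abs_mul, abs_two]
      ring_nf
    refine abs_abs_sub_le_of_abs_sq_sub_sq_le (standingSlope_nonneg _ _) hθ.le ?_
    rw [standingSlope, sq_sqrt (by linarith [hF.nonneg (hu.isSolution.mem_Icc x y)]), henergy]
    linarith [hx y]
  · refine Set.OrdConnected.isPreconnected ⟨fun a ha b hb z hz => ?_⟩
    have hmono := (hu.isSolution.strictMono x).monotone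
    have hmin := hF.min_le_of_mem_Icc (hu.isSolution.mem_Icc x a).1 (hu.isSolution.mem_Icc x b).2
      ⟨hmono hz.1, hmono hz.2⟩
    simp only [standingSlope, Set.mem_ofPred_eq, lt_sqrt hθ.le] at ha hb ⊢
    linarith [lt_min ((div_lt_iff₀' two_pos).2 ha) ((div_lt_iff₀' two_pos).2 hb)]

theorem abs_momentum_sub_integral_le (hF : ContDiff ℝ 2 F) (hu : IsTravelingWave F c u)
    {φ : ℝ → ℝ} (hφ : Continuous φ) {x η : ℝ} (hη : ∀ y, |pdx u x y - φ (u x y)| ≤ η) :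
    |momentum u x - ∫ s in (-1 : ℝ)..1, φ s| ≤ 2 * η := by
  have hux : Continuous (u x) := hu.isSolution.contDiff_three.continuous.uncurry_left x
  obtain ⟨K, -, hK⟩ := exists_forall_abs_le hφ (-1) 1
  have hint : Integrable fun y => φ (u x y) * pdy u x y :=
    hu.integrable_mul_dy (hφ.comp hux) (fun y => hK _ (hu.isSolution.mem_Icc x y)) x
  rw [← hu.integral_comp_mul_dy hφ x, momentum,
    ← integral_sub (hu.integrable_momentumDensity hF x) hint]
  simp_rw [momentumDensity, ← sub_mul]
  exact hu.abs_integral_mul_dy_le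
    ((hu.isSolution.contDiff_dx.continuous.uncurry_left x).sub (hφ.comp hux)) hη x

theorem tendsto_abs_momentum_atTop (hF : BalancedPotential F) (hc : 0 < c)
    (hu : IsTravelingWave F c u) :
    Tendsto (fun x => |momentum u x|) atTop (𝓝 (standingEnergy F)) := by
  have hslope := continuous_standingSlope hF.continuous
  refine Metric.tendsto_nhds.2 fun ε hε => ?_
  filter_upwards [hu.eventually_dx_near_standingSlope hF hc (η := ε / 3) (by positivity)] with x hx
  rw [Real.dist_eq, ← abs_of_pos hF.standingEnergy_pos]
  refine lt_of_le_of_lt (b := 2 * (ε / 3)) ?_ (by linarith)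
  rcases hx with hx | hx
  · exact (abs_abs_sub_abs_le _ _).trans (hu.abs_momentum_sub_integral_le hF.contDiff hslope hx)
  · rw [← abs_neg (standingEnergy F), standingEnergy, ← intervalIntegral.integral_neg]
    refine (abs_abs_sub_abs_le _ _).trans
      (hu.abs_momentum_sub_integral_le hF.contDiff hslope.neg fun y => ?_)
    simpa only [Pi.neg_apply, sub_neg_eq_add] using hx y

theorem tendsto_abs_momentum_atBot (hF : BalancedPotential F) (hc : 0 < c)
    (hu : IsTravelingWave F c u) :
    Tendsto (fun x => |momentum u x|) atBot (𝓝 (standingEnergy F)) := by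
  simpa [Function.comp_def, momentum_reflect] using
    (hu.reflect.tendsto_abs_momentum_atTop hF hc).comp tendsto_neg_atBot_atTop

theorem dissipation_pos (hF : ContDiff ℝ 2 F) (hu : IsTravelingWave F c u) (x : ℝ) :
    0 < dissipation u x := by
  have hpos (y : ℝ) : 0 < (pdy u x y) ^ 2 := pow_pos (hu.isSolution.dy_pos x y) 2
  have hsupp : (Function.support fun y => (pdy u x y) ^ 2) = Set.univ :=
    Set.eq_univ_of_forall fun y => (hpos y).ne'
  rw [dissipation, integral_pos_iff_support_of_nonneg (fun y => (hpos y).le)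
    (hu.integrable_dy_sq hF x), hsupp]
  simp

theorem strictAnti_momentum (hF : BalancedPotential F) (hc : 0 < c) (hu : IsTravelingWave F c u) :
    StrictAnti (momentum u) := fun a b hab => by
  have hpos : 0 < ∫ x in a..b, dissipation u x :=
    intervalIntegral.intervalIntegral_pos_of_pos
      (hu.integrable_dissipation hF hc).intervalIntegrable (hu.dissipation_pos hF.contDiff) hab
  linarith [hu.momentum_balance hF a b, mul_pos hc hpos]

theorem tendsto_momentum (hF : BalancedPotential F) (hc : 0 < c) (hu : IsTravelingWave F c u) :
    Tendsto (momentum u) atBot (𝓝 (standingEnergy F)) ∧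
      Tendsto (momentum u) atTop (𝓝 (-standingEnergy F)) := by
  obtain ⟨D, hD⟩ := hu.exists_abs_momentum_le hF.contDiff
  exact tendsto_of_strictAnti_of_tendsto_abs (hu.strictAnti_momentum hF hc) hD
    (hu.tendsto_abs_momentum_atTop hF hc) (hu.tendsto_abs_momentum_atBot hF hc)

theorem mul_integral_dy_sq (hF : BalancedPotential F) (hc : 0 < c) (hu : IsTravelingWave F c u) :
    c * ∫ p : ℝ × ℝ, (pdy u p.1 p.2) ^ 2 = 2 * standingEnergy F := by
  obtain ⟨hbot, htop⟩ := hu.tendsto_momentum hF hc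
  have hdiss := (intervalIntegral_tendsto_integral (hu.integrable_dissipation hF hc)
    tendsto_neg_atTop_atBot tendsto_id).const_mul c
  simp_rw [hu.momentum_balance hF] at hdiss
  have hlim := tendsto_nhds_unique hdiss ((hbot.comp tendsto_neg_atTop_atBot).sub htop)
  rw [Measure.volume_eq_prod, integral_prod _ (hu.integrable_dy_sq_prod hF hc)]
  exact hlim.trans (by ring)

/-- The sign of `uₓ` for large `x` is read off the limit of the momentum. -/
theorem eventually_dx_add_standingSlope_le (hF : BalancedPotential F) (hc : 0 < c)
    (hu : IsTravelingWave F c u) {η : ℝ} (hη : 0 < η) :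
    ∀ᶠ x in atTop, ∀ y, pdx u x y + standingSlope F (u x y) ≤ η := by
  have hpos := hF.standingEnergy_pos
  filter_upwards [hu.eventually_dx_near_standingSlope hF hc
    (η := min η (standingEnergy F / 3)) (by positivity),
    (hu.tendsto_momentum hF hc).2.eventually_lt_const (neg_lt_zero.2 hpos)] with x hx hneg y
  rcases hx with hx | hx
  · have hmom := (abs_le.1 (hu.abs_momentum_sub_integral_le hF.contDiff
      (continuous_standingSlope hF.continuous) hx)).1
    rw [← standingEnergy] at hmom
    linarith [min_le_right η (standingEnergy F / 3)]
  · exact (le_abs_self _).trans ((hx y).trans (min_le_left _ _))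

end IsTravelingWave
/-! ### Exponential decay on lower half-planes -/

theorem exists_pos_sq_add_mul_le {c μ : ℝ} (hc : 0 ≤ c) (hμ : 0 < μ) :
    ∃ k > 0, k ^ 2 + c * k ≤ μ := by
  refine ⟨min 1 (μ / (1 + c)), by positivity, ?_⟩
  have hk_one : min 1 (μ / (1 + c)) ≤ 1 := min_le_left _ _
  have hk_mul : min 1 (μ / (1 + c)) * (1 + c) ≤ μ :=
    (le_div_iff₀ (by positivity)).1 (min_le_right _ _)
  have hk_nonneg : 0 ≤ min 1 (μ / (1 + c)) := by positivity
  nlinarith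

namespace IsSolution

variable {F : ℝ → ℝ} {c : ℝ} {u : ℝ → ℝ → ℝ}

theorem driftLaplacian_one_add (hu : IsSolution F c u) (x y : ℝ) :
    driftLaplacian c (fun x y => 1 + u x y) x y = deriv F (u x y) := by
  rw [driftLaplacian_const_add]
  exact hu.equation x y

theorem exists_gradient_le_mul (hF : BalancedPotential F) (hu : IsSolution F c u) :
    ∃ G > 0, ∀ x y E, 0 < E →
      (∀ x' y', |x' - x| ≤ 1 → |y' - y| ≤ 1 → 1 + u x' y' ≤ E) →
      |pdx u x y| ≤ G * E ∧ |pdy u x y| ≤ G * E := by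
  obtain ⟨C, hC, hgrad⟩ := exists_gradient_bound c
  obtain ⟨K, hK, hlin⟩ := exists_forall_abs_le_mul_sub (contDiff_deriv_of_two hF.contDiff)
    hF.deriv_neg_one 1
  refine ⟨C * (1 + K), by positivity, fun x y E hE hbox => ?_⟩
  have hgrad_one_add := hgrad (fun x y => 1 + u x y) (contDiff_const.add hu.contDiff_two)
    x y E (K * E) hE
    (fun x' y' hx' hy' => by
      rw [abs_of_nonneg (by linarith [(hu.mem_Icc x' y').1])]
      exact hbox x' y' hx' hy')
    fun x' y' hx' hy' => by
      rw [hu.driftLaplacian_one_add]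
      refine (hlin _ (hu.mem_Icc x' y')).trans (mul_le_mul_of_nonneg_left ?_ hK.le)
      linarith [hbox x' y' hx' hy']
  rwa [pdx_const_add, pdy_const_add, ← one_add_mul, ← mul_assoc] at hgrad_one_add

theorem exists_abs_hamiltonianDensity_le_mul (hF : BalancedPotential F) (hu : IsSolution F c u) :
    ∃ C > 0, ∀ x y E, 0 < E →
      (∀ x' y', |x' - x| ≤ 1 → |y' - y| ≤ 1 → 1 + u x' y' ≤ E) →
      |hamiltonianDensity F u x y| ≤ C * E := by
  obtain ⟨G, hG, hgrad⟩ := hu.exists_gradient_le_mul hF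
  obtain ⟨D, hD⟩ := hu.exists_derivBound hF.contDiff
  obtain ⟨K, hK, hlin⟩ := exists_forall_abs_le_mul_sub (hF.contDiff.of_le one_le_two)
    hF.apply_neg_one 1
  have hDpos := hD.pos
  refine ⟨D * G + K, by positivity, fun x y E hE hbox => ?_⟩
  have hsq {p : ℝ} (hpD : |p| ≤ D) (hpE : |p| ≤ G * E) : p ^ 2 ≤ D * (G * E) := by
    rw [← sq_abs, sq]
    exact mul_le_mul hpD hpE (abs_nonneg _) hD.pos.le
  have hdx := hsq (hD.dx x y) (hgrad x y E hE hbox).1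
  have hdy := hsq (hD.dy x y) (hgrad x y E hE hbox).2
  have hFu : |F (u x y)| ≤ K * E := by
    refine (hlin _ (hu.mem_Icc x y)).trans (mul_le_mul_of_nonneg_left ?_ hK.le)
    linarith [hbox x y (by simp) (by simp)]
  obtain ⟨hFlow, hFhigh⟩ := abs_le.1 hFu
  rw [hamiltonianDensity, add_mul, mul_assoc, abs_le]
  constructor <;> linarith [sq_nonneg (pdx u x y), sq_nonneg (pdy u x y)]

end IsSolution

namespace IsTravelingWave

variable {F : ℝ → ℝ} {c : ℝ} {u : ℝ → ℝ → ℝ}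

/-- Far to the right, `u` decreases along the diagonal wherever it equals `-1 + δ`, so it cannot
cross that level. -/
theorem exists_wedge (hF : BalancedPotential F) (hc : 0 < c) (hu : IsTravelingWave F c u)
    {δ : ℝ} (hδ : 0 < δ) (hδ1 : δ < 1) :
    ∃ X Y, ∀ x ≥ X, ∀ y ≤ Y + (x - X), u x y ≤ -1 + δ := by
  have hslope : 0 < standingSlope F (-1 + δ) :=
    sqrt_pos.2 (mul_pos two_pos (hF.pos_of_mem_Ioc ⟨by linarith, by linarith⟩))
  have hη : 0 < standingSlope F (-1 + δ) / 4 := by positivity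
  obtain ⟨X, hX⟩ := eventually_atTop.1 ((hu.eventually_dx_add_standingSlope_le hF hc hη).and
    (eventually_atTop_forall_abs_le (g := pdy u) (hu.tendsto_dy_cobounded hF hc) hη))
  obtain ⟨Y, hY⟩ := ((hu.tendsto_atBot X).eventually_lt_const
    (show (-1 : ℝ) < -1 + δ by linarith)).exists
  refine ⟨X, Y, fun x hx y hy => ?_⟩
  have hderiv := hasDerivAt_diagonal hu.isSolution.differentiable X Y
  have hdiag : u (X + (x - X)) (Y + (x - X)) ≤ -1 + δ := by
    refine image_le_of_deriv_right_lt_deriv_boundary (a := 0) (B := fun _ => -1 + δ)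
      (B' := fun _ => 0) (fun t _ => (hderiv t).continuousAt.continuousWithinAt)
      (fun t _ => (hderiv t).hasDerivWithinAt) (by simpa only [add_zero] using hY.le)
      (fun t => hasDerivAt_const t _) (fun t ht hlevel => ?_)
      (Set.right_mem_Icc.2 (sub_nonneg.2 hx))
    obtain ⟨hdx, hdy⟩ := hX (X + t) (by linarith [ht.1])
    have hdx_level := hdx (Y + t)
    rw [hlevel] at hdx_level
    linarith [(abs_le.1 (hdy (Y + t))).2]
  rw [add_sub_cancel] at hdiag
  exact ((hu.isSolution.strictMono x).monotone hy).trans hdiag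

theorem exists_one_add_le_exp (hF : BalancedPotential F) (hc : 0 < c)
    (hu : IsTravelingWave F c u) (Y : ℝ) :
    ∃ C > 0, ∃ κ > 0, ∀ x, ∀ y ≤ Y, 1 + u x y ≤ C * exp (-(κ * x)) := by
  obtain ⟨μ, hμ, δ, hδ, hδ1, hlin⟩ := hF.exists_mul_le_deriv
  obtain ⟨X, Y₀, hwedge⟩ := hu.exists_wedge hF hc hδ hδ1
  obtain ⟨k, hk, hkμ⟩ := exists_pos_sq_add_mul_le hc.le hμ
  obtain ⟨A, hXA, hYA⟩ : ∃ A, X ≤ A ∧ X + Y - Y₀ ≤ A := ⟨_, le_max_left _ _, le_max_right _ _⟩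
  refine ⟨4 * exp (k / 2 * A), by positivity, k / 2, by positivity, fun x y hy => ?_⟩
  rw [mul_assoc, ← exp_add,
    show k / 2 * A + -(k / 2 * x) = -(k * ((x - A) / 2)) by ring]
  rcases le_total x A with hxA | hAx
  · have hexp : 1 ≤ exp (-(k * ((x - A) / 2))) := one_le_exp (by nlinarith)
    linarith [(hu.isSolution.mem_Icc x y).2]
  have hbox (x' y' : ℝ) (hx' : |x' - x| ≤ (x - A) / 2) (hy' : |y' - y| ≤ (x - A) / 2) :
      u x' y' ≤ -1 + δ := by
    have hleft := (abs_le.1 hx').1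
    have hup := (abs_le.1 hy').2
    exact hwedge x' (by linarith) y' (by linarith)
  refine le_exp_of_mul_le_driftLaplacian (v := fun x y => 1 + u x y)
    (contDiff_const.add hu.isSolution.contDiff_two) hc.le hμ hk.le hkμ (by linarith)
    (fun x' y' hx' hy' => by linarith [hbox x' y' hx' hy']) fun x' y' hx' hy' => ?_
  rw [hu.isSolution.driftLaplacian_one_add, add_comm 1]
  exact hlin _ ⟨(hu.isSolution.mem_Icc x' y').1, hbox x' y' hx' hy'⟩

theorem exists_abs_hamiltonianDensity_le_exp (hF : BalancedPotential F) (hc : 0 < c)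
    (hu : IsTravelingWave F c u) (Y : ℝ) :
    ∃ C > 0, ∃ κ > 0, ∀ x, ∀ y ≤ Y, |hamiltonianDensity F u x y| ≤ C * exp (-(κ * x)) := by
  obtain ⟨C, hC, κ, hκ, hdecay⟩ := hu.exists_one_add_le_exp hF hc (Y + 1)
  obtain ⟨B, hB, hdensity⟩ := hu.isSolution.exists_abs_hamiltonianDensity_le_mul hF
  refine ⟨B * (C * exp κ), by positivity, κ, hκ, fun x y hy => ?_⟩
  rw [mul_assoc]
  refine hdensity x y _ (by positivity) fun x' y' hx' hy' => ?_
  have hleft := (abs_le.1 hx').1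
  have hup := (abs_le.1 hy').2
  refine (hdecay x' y' (by linarith)).trans ?_
  rw [mul_assoc, ← exp_add]
  gcongr
  nlinarith

end IsTravelingWave
/-! ### Limits of the Hamiltonian -/

theorem integrable_exp_neg_mul_abs {κ : ℝ} (hκ : 0 < κ) :
    Integrable fun x : ℝ => exp (-(κ * |x|)) := by
  rw [← integrableOn_univ, ← Set.Iic_union_Ioi (a := (0 : ℝ))]
  refine IntegrableOn.union
    ((integrableOn_exp_mul_Iic hκ 0).congr_fun (fun x hx => ?_) measurableSet_Iic)
    ((integrableOn_exp_mul_Ioi (neg_lt_zero.2 hκ) 0).congr_fun (fun x hx => ?_) measurableSet_Ioi)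
  · simp only [abs_of_nonpos (Set.mem_Iic.1 hx), mul_neg, neg_neg]
  · simp only [abs_of_pos (Set.mem_Ioi.1 hx), neg_mul]

theorem tendsto_prodMk_right_cobounded {α β : Type*} [Bornology α] [Bornology β] (b : β) :
    Tendsto (fun a : α => (a, b)) (Bornology.cobounded α) (Bornology.cobounded (α × β)) := by
  have hfst : Tendsto (fun a : α => (a, b)) (Bornology.cobounded α)
      (comap Prod.fst (Bornology.cobounded α)) := tendsto_comap_iff.2 tendsto_id
  rw [Bornology.cobounded_prod]
  exact hfst.mono_right le_sup_left

namespace IsTravelingWave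

variable {F : ℝ → ℝ} {c : ℝ} {u : ℝ → ℝ → ℝ}

theorem exists_integrable_majorant (hF : BalancedPotential F) (hc : 0 < c)
    (hu : IsTravelingWave F c u) (Y : ℝ) :
    ∃ g : ℝ → ℝ, Integrable g ∧ ∀ y ≤ Y, ∀ x, |hamiltonianDensity F u x y| ≤ g x := by
  obtain ⟨C, hC, κ, hκ, hright⟩ := hu.exists_abs_hamiltonianDensity_le_exp hF hc Y
  obtain ⟨C', hC', κ', hκ', hleft⟩ := hu.reflect.exists_abs_hamiltonianDensity_le_exp hF hc Y
  refine ⟨fun x => C * exp (-(κ * |x|)) + C' * exp (-(κ' * |x|)),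
    ((integrable_exp_neg_mul_abs hκ).const_mul C).add
      ((integrable_exp_neg_mul_abs hκ').const_mul C'), fun y hy x => ?_⟩
  rcases le_total 0 x with hx | hx
  · refine le_add_of_le_of_nonneg ?_ (by positivity)
    rw [abs_of_nonneg hx]
    exact hright x y hy
  · refine le_add_of_nonneg_of_le (by positivity) ?_
    rw [abs_of_nonpos hx]
    simpa only [hamiltonianDensity_reflect, neg_neg] using hleft (-x) y hy

theorem integrable_hamiltonianDensity (hF : BalancedPotential F) (hc : 0 < c)
    (hu : IsTravelingWave F c u) (y : ℝ) : Integrable fun x => hamiltonianDensity F u x y := by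
  obtain ⟨g, hg, hbound⟩ := hu.exists_integrable_majorant hF hc y
  exact hg.mono' ((hu.isSolution.contDiff_hamiltonianDensity hF.contDiff).continuous.uncurry_right
    y).aestronglyMeasurable (.of_forall (hbound y le_rfl))

theorem tendsto_hamiltonian_atBot (hF : BalancedPotential F) (hc : 0 < c)
    (hu : IsTravelingWave F c u) : Tendsto (hamiltonian F u) atBot (𝓝 0) := by
  obtain ⟨g, hg, hbound⟩ := hu.exists_integrable_majorant hF hc 0
  rw [← integral_zero ℝ ℝ]
  exact tendsto_integral_filter_of_dominated_convergence g
    (.of_forall fun y => (hu.integrable_hamiltonianDensity hF hc y).aestronglyMeasurable)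
    ((eventually_le_atBot 0).mono fun y hy => .of_forall (hbound y hy)) hg
    (.of_forall (hu.isSolution.tendsto_hamiltonianDensity_zero hF.contDiff hF.apply_neg_one
      (fun t => tendsto_atBot_add_const_right _ t tendsto_id) hu.tendsto_atBot))

theorem tendsto_intervalIntegral_momentumDensity (hF : BalancedPotential F) (hc : 0 < c)
    (hu : IsTravelingWave F c u) {l : Filter ℝ} [l.IsCountablyGenerated]
    (hl : l ≤ Bornology.cobounded ℝ) (y₁ y₂ : ℝ) :
    Tendsto (fun x => ∫ y in y₁..y₂, momentumDensity u x y) l (𝓝 0) := by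
  obtain ⟨C, hC⟩ := hu.isSolution.exists_derivBound hF.contDiff
  refine tendsto_intervalIntegral_zero (g := fun y x => momentumDensity u x y) (K := C * C)
    (hu.isSolution.contDiff_momentumDensity.continuous.comp continuous_swap)
    (fun y x => ?_) (fun y => ?_) y₁ y₂
  · rw [momentumDensity, abs_mul]
    exact mul_le_mul (hC.dx x y) (hC.dy x y) (abs_nonneg _) hC.pos.le
  · exact bdd_le_mul_tendsto_zero' C (.of_forall fun x => hC.dx x y)
      ((hu.tendsto_dy_cobounded hF hc).comp ((tendsto_prodMk_right_cobounded y).mono_left hl))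

theorem abs_intervalIntegral_dy_sq_le_dissipation (hF : ContDiff ℝ 2 F)
    (hu : IsTravelingWave F c u) (x y₁ y₂ : ℝ) :
    |∫ y in y₁..y₂, (pdy u x y) ^ 2| ≤ dissipation u x := by
  simpa only [abs_sq, dissipation] using
    abs_intervalIntegral_le_integral_abs (hu.integrable_dy_sq hF x) y₁ y₂

theorem integrable_intervalIntegral_dy_sq (hF : BalancedPotential F) (hc : 0 < c)
    (hu : IsTravelingWave F c u) (y₁ y₂ : ℝ) :
    Integrable fun x => ∫ y in y₁..y₂, (pdy u x y) ^ 2 :=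
  (hu.integrable_dissipation hF hc).mono'
    (intervalIntegral.continuous_parametric_intervalIntegral_of_continuous'
      hu.isSolution.continuous_dy_sq _ _).aestronglyMeasurable
    (.of_forall fun x => hu.abs_intervalIntegral_dy_sq_le_dissipation hF.contDiff x y₁ y₂)

theorem hamiltonian_sub_hamiltonian (hF : BalancedPotential F) (hc : 0 < c)
    (hu : IsTravelingWave F c u) (y₁ y₂ : ℝ) :
    hamiltonian F u y₂ - hamiltonian F u y₁ = c * ∫ x, ∫ y in y₁..y₂, (pdy u x y) ^ 2 := by
  have hρ (y : ℝ) := intervalIntegral_tendsto_integral (hu.integrable_hamiltonianDensity hF hc y)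
    tendsto_neg_atTop_atBot tendsto_id
  have hright := hu.tendsto_intervalIntegral_momentumDensity hF hc
    IsOrderBornology.atTop_le_cobounded y₁ y₂
  have hleft := (hu.tendsto_intervalIntegral_momentumDensity hF hc
    IsOrderBornology.atBot_le_cobounded y₁ y₂).comp tendsto_neg_atTop_atBot
  have hdiss := (intervalIntegral_tendsto_integral
    (hu.integrable_intervalIntegral_dy_sq hF hc y₁ y₂)
    tendsto_neg_atTop_atBot tendsto_id).const_mul c
  simp_rw [hu.isSolution.box_balance hF.contDiff] at hdiss
  have hbox := (((hρ y₂).sub (hρ y₁)).sub hright).add hleft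
  rw [sub_zero, add_zero] at hbox
  exact tendsto_nhds_unique hbox hdiss

theorem tendsto_integral_intervalIntegral_dy_sq (hF : BalancedPotential F) (hc : 0 < c)
    (hu : IsTravelingWave F c u) :
    Tendsto (fun m : ℝ => ∫ x, ∫ y in -m..m, (pdy u x y) ^ 2) atTop
      (𝓝 (∫ p : ℝ × ℝ, (pdy u p.1 p.2) ^ 2)) := by
  rw [Measure.volume_eq_prod, integral_prod _ (hu.integrable_dy_sq_prod hF hc)]
  exact tendsto_integral_filter_of_dominated_convergence (dissipation u)
    (.of_forall fun m =>
      (hu.integrable_intervalIntegral_dy_sq hF hc (-m) m).aestronglyMeasurable)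
    (.of_forall fun m => .of_forall fun x =>
      hu.abs_intervalIntegral_dy_sq_le_dissipation hF.contDiff x (-m) m)
    (hu.integrable_dissipation hF hc)
    (.of_forall fun x => intervalIntegral_tendsto_integral (hu.integrable_dy_sq hF.contDiff x)
      tendsto_neg_atTop_atBot tendsto_id)

theorem tendsto_hamiltonian_atTop (hF : BalancedPotential F) (hc : 0 < c)
    (hu : IsTravelingWave F c u) :
    Tendsto (hamiltonian F u) atTop (𝓝 (2 * standingEnergy F)) := by
  have hstrip := (hu.tendsto_integral_intervalIntegral_dy_sq hF hc).const_mul c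
  simp_rw [← hu.hamiltonian_sub_hamiltonian hF hc, hu.mul_integral_dy_sq hF hc] at hstrip
  simpa [Function.comp_def] using
    hstrip.add ((hu.tendsto_hamiltonian_atBot hF hc).comp tendsto_neg_atTop_atBot)

end IsTravelingWave

theorem rho_limits_and_total_balance_general {F : ℝ → ℝ} {c : ℝ} {u : ℝ → ℝ → ℝ}
    (hF : BalancedPotential F) (hc : 0 < c) (hu : IsTravelingWave F c u) :
    (∀ y, Integrable fun x => hamiltonianDensity F u x y) ∧
    (Integrable fun p : ℝ × ℝ => (pdy u p.1 p.2) ^ 2) ∧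
    Tendsto (hamiltonian F u) atBot (𝓝 0) ∧
    Tendsto (hamiltonian F u) atTop (𝓝 (2 * standingEnergy F)) ∧
    c * ∫ p : ℝ × ℝ, (pdy u p.1 p.2) ^ 2 = 2 * standingEnergy F :=
  ⟨hu.integrable_hamiltonianDensity hF hc, hu.integrable_dy_sq_prod hF hc,
    hu.tendsto_hamiltonian_atBot hF hc, hu.tendsto_hamiltonian_atTop hF hc,
    hu.mul_integral_dy_sq hF hc⟩

/-- Limits of the Hamiltonian `ρ` at `±∞` and the total balance
`c ∫_{ℝ²} uᵧ² = 2𝔢` (from the proof of Lemma 2.6, Case (i)). -/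
theorem rho_limits_and_total_balance
    (F : ℝ → ℝ) (hF : BalancedDoubleWell F) (c : ℝ) (hc : 0 < c)
    (u : ℝ → ℝ → ℝ) (hu : IsTravelingWave F c u) :
    Tendsto (fun y => ∫ x,
        ((1 / 2) * ((pdx u x y) ^ 2 - (pdy u x y) ^ 2) + F (u x y)))
      atBot (nhds 0) ∧
    Tendsto (fun y => ∫ x,
        ((1 / 2) * ((pdx u x y) ^ 2 - (pdy u x y) ^ 2) + F (u x y)))
      atTop (nhds (2 * ∫ s in (-1 : ℝ)..1, Real.sqrt (2 * F s))) ∧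
    c * ∫ p : ℝ × ℝ, (pdy u p.1 p.2) ^ 2 =
      2 * ∫ s in (-1 : ℝ)..1, Real.sqrt (2 * F s) := by
  exact (rho_limits_and_total_balance_general hF.balancedPotential hc hu).2.2
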